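/- Suppose K ≠ ∅, the highest-degree homogeneous part f^hm of f is a positive definite form (f^hm(x) > 0 for all x ≠ 0 in ℝⁿ), and f_min = inf_{x∈K} f(x) (which is finite). If the LICQC, SCC and SOSC hold at every global minimizer of the problem (H): minimize f̃(x̃) − f_min·x_0^d subject to c̃_j(x̃) = 0 (j∈E), ‖x̃‖² − 1 = 0, c̃_j(x̃) ≥ 0 (j∈I), x_0 ≥ 0, then there exists k0 ∈ ℕ such that f_k^den = f_min for all k ≥ k0. -/

import Mathlib

open MvPolynomial MeasureTheory

noncomputable section

/-- The space of real polynomials in `n` variables. -/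
abbrev RPoly (n : ℕ) : Type := MvPolynomial (Fin n) ℝ

/-- The degree `|α|` of a monomial power `α`. -/
def mdeg {n : ℕ} (α : Fin n →₀ ℕ) : ℕ := ∑ i, α i

/-- `p` is a sum of squares of polynomials. -/
def IsSOS {n : ℕ} (p : RPoly n) : Prop :=
  ∃ L : List (RPoly n), p = (L.map (fun q => q ^ 2)).sum

/-- The truncation `QM(g)_k` of the quadratic module generated by `(g j)_{j ∈ S}`. -/
def QModDeg {n : ℕ} {κ : Type} (S : Finset κ) (g : κ → RPoly n) (k : ℕ) :
    Set (RPoly n) :=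
  {p | ∃ σ0 : RPoly n, ∃ σ : κ → RPoly n,
      IsSOS σ0 ∧ σ0.totalDegree ≤ k ∧
      (∀ j ∈ S, IsSOS (σ j) ∧ (σ j).totalDegree + (g j).totalDegree ≤ k) ∧
      p = σ0 + ∑ j ∈ S, g j * σ j}

/-- The truncation `Ideal(h)_k` of the ideal generated by `(h j)_{j ∈ S}`. -/
def IdealDeg {n : ℕ} {ι : Type} (S : Finset ι) (h : ι → RPoly n) (k : ℕ) :
    Set (RPoly n) :=
  {p | ∃ q : ι → RPoly n,
      (∀ j ∈ S, (q j).totalDegree + (h j).totalDegree ≤ k) ∧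
      p = ∑ j ∈ S, h j * q j}

/-- The quadratic module `QM(g)` generated by `(g j)_{j ∈ S}`. -/
def QModFull {n : ℕ} {κ : Type} (S : Finset κ) (g : κ → RPoly n) : Set (RPoly n) :=
  {p | ∃ σ0 : RPoly n, ∃ σ : κ → RPoly n,
      IsSOS σ0 ∧ (∀ j ∈ S, IsSOS (σ j)) ∧ p = σ0 + ∑ j ∈ S, g j * σ j}

/-- The ideal `Ideal(h)` generated by `(h j)_{j ∈ S}`. -/
def IdealFull {n : ℕ} {ι : Type} (S : Finset ι) (h : ι → RPoly n) : Set (RPoly n) :=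
  (Ideal.span (h '' (S : Set ι)) : Ideal (RPoly n))

/-- `Ideal(c_eq) + QM(c_in)` is archimedean. -/
def ArchimedeanQM {n : ℕ} (E I : Finset ℕ) (c : ℕ → RPoly n) : Prop :=
  ∃ R : ℝ, 0 < R ∧ ∃ p1 ∈ IdealFull E c, ∃ p2 ∈ QModFull I c,
    (C R : RPoly n) - ∑ i, (X i : RPoly n) ^ 2 = p1 + p2

/-- The basic closed semialgebraic set `K`. -/
def Kset {n : ℕ} (E I : Finset ℕ) (c : ℕ → RPoly n) : Set (Fin n → ℝ) :=
  {x | (∀ j ∈ E, eval x (c j) = 0) ∧ (∀ j ∈ I, 0 ≤ eval x (c j))}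

/-- The bilinear pairing `⟨p, y⟩ = ∑_α p_α y_α`. -/
def pairing {n : ℕ} (p : RPoly n) (y : (Fin n →₀ ℕ) → ℝ) : ℝ :=
  ∑ α ∈ p.support, p.coeff α * y α

/-- Membership in the moment cone `ℛ_d(K)`: the entries `y_α`, `|α| ≤ d`, are the
moments of a finite Borel measure supported in the closed set `K`. -/
def InMomentCone {n : ℕ} (d : ℕ) (K : Set (Fin n → ℝ)) (y : (Fin n →₀ ℕ) → ℝ) : Prop :=
  ∃ μ : Measure (Fin n → ℝ), IsFiniteMeasure μ ∧ μ Kᶜ = 0 ∧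
    ∀ α : Fin n →₀ ℕ, mdeg α ≤ d →
      Integrable (fun x => ∏ i, x i ^ α i) μ ∧
      y α = ∫ x, (∏ i, x i ^ α i) ∂μ

/-- The cone `P_d(K)` of polynomials of degree at most `d` that are nonnegative on `K`. -/
def PdCone {n : ℕ} (d : ℕ) (K : Set (Fin n → ℝ)) : Set (RPoly n) :=
  {p | p.totalDegree ≤ d ∧ ∀ x ∈ K, 0 ≤ eval x p}

/-- The interior of `P_d(K)` in the coefficient topology of `ℝ[x]_d`. -/
def PdInterior {n : ℕ} (d : ℕ) (K : Set (Fin n → ℝ)) : Set (RPoly n) :=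
  {p | p.totalDegree ≤ d ∧ ∃ ε : ℝ, 0 < ε ∧ ∀ q : RPoly n, q.totalDegree ≤ d →
      (∀ α : Fin n →₀ ℕ, |q.coeff α - p.coeff α| ≤ ε) → ∀ x ∈ K, 0 ≤ eval x q}

instance degLEFintype (n t : ℕ) : Fintype {α : Fin n →₀ ℕ // mdeg α ≤ t} := by
  apply Fintype.ofInjective
    (fun a : {α : Fin n →₀ ℕ // mdeg α ≤ t} =>
      (fun i => (⟨a.1 i, by
        have h1 : a.1 i ≤ mdeg a.1 :=
          Finset.single_le_sum (fun j _ => Nat.zero_le _) (Finset.mem_univ i)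
        exact Nat.lt_succ_of_le (le_trans h1 a.2)⟩ : Fin (t + 1))) :
        {α : Fin n →₀ ℕ // mdeg α ≤ t} → (Fin n → Fin (t + 1)))
  intro a b hab
  apply Subtype.ext
  ext i
  exact congrArg Fin.val (congrFun hab i)

/-- The moment matrix `M_t[w]`, indexed by monomial powers of degree at most `t`. -/
def momentMatrix {n : ℕ} (t : ℕ) (w : (Fin n →₀ ℕ) → ℝ) :
    Matrix {α : Fin n →₀ ℕ // mdeg α ≤ t} {α : Fin n →₀ ℕ // mdeg α ≤ t} ℝ :=
  fun α β => w (α.1 + β.1)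

/-- `w` admits a flat truncation: for some `d0 ≤ t ≤ k`,
`rank M_{t-dK}[w] = rank M_t[w]`. -/
def HasFlatTruncation {n : ℕ} (d0 dK k : ℕ) (w : (Fin n →₀ ℕ) → ℝ) : Prop :=
  ∃ t : ℕ, d0 ≤ t ∧ t ≤ k ∧
    (momentMatrix (t - dK) w).rank = (momentMatrix t w).rank

/-- The gradient of a polynomial at a point. -/
def gradP {n : ℕ} (p : RPoly n) (u : Fin n → ℝ) : Fin n → ℝ :=
  fun i => eval u (pderiv i p)

/-- The Hessian of a polynomial at a point. -/
def hessP {n : ℕ} (p : RPoly n) (u : Fin n → ℝ) : Fin n → Fin n → ℝ :=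
  fun i j => eval u (pderiv i (pderiv j p))

/-- The classical optimality conditions (LICQC, KKT with SCC and SOSC) at the point `u`
for the problem: minimize `F` subject to `ge j = 0` (`j ∈ Es`), `gi j ≥ 0` (`j ∈ Is`). -/
def OptCondsAt {n : ℕ} {ι κ : Type}
    (Es : Finset ι) (ge : ι → RPoly n) (Is : Finset κ) (gi : κ → RPoly n)
    (F : RPoly n) (u : Fin n → ℝ) : Prop :=
  -- LICQC: gradients of active constraints are linearly independent
  LinearIndependent ℝ
    (Sum.elim
      (fun j : {j : ι // j ∈ Es ∧ eval u (ge j) = 0} => gradP (ge j.1) u)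
      (fun j : {j : κ // j ∈ Is ∧ eval u (gi j) = 0} => gradP (gi j.1) u)) ∧
  ∃ (lamE : ι → ℝ) (lamI : κ → ℝ),
    -- KKT stationarity
    (gradP F u =
      (∑ j ∈ Es, lamE j • gradP (ge j) u) + ∑ j ∈ Is, lamI j • gradP (gi j) u) ∧
    (∀ j ∈ Is, 0 ≤ lamI j ∧ lamI j * eval u (gi j) = 0) ∧
    -- SCC
    (∀ j ∈ Is, 0 < lamI j + eval u (gi j)) ∧
    -- SOSC
    (∀ v : Fin n → ℝ, v ≠ 0 →
      (∀ j ∈ Es, (∑ i, v i * gradP (ge j) u i) = 0) →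
      (∀ j ∈ Is, eval u (gi j) = 0 → (∑ i, v i * gradP (gi j) u i) = 0) →
      0 < ∑ i, ∑ i', v i *
        ((hessP F u i i' - ∑ j ∈ Es, lamE j * hessP (ge j) u i i')
          - ∑ j ∈ Is, lamI j * hessP (gi j) u i i') * v i')

/-- The degree-`ℓ` homogenization `x_0^ℓ p(x/x_0)` of `p`; the new variable `x_0`
is the variable of index `0` in `Fin (n+1)`. -/
def homogAux {n : ℕ} (ℓ : ℕ) (p : RPoly n) : RPoly (n + 1) :=
  ∑ α ∈ p.support,
    monomial
      (Finsupp.single (0 : Fin (n + 1)) (ℓ - mdeg α) + Finsupp.mapDomain Fin.succ α)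
      (p.coeff α)

/-- The homogenization `p̃` of `p`. -/
def homogenize {n : ℕ} (p : RPoly n) : RPoly (n + 1) := homogAux p.totalDegree p

/-- The polynomial `‖x̃‖² - 1`. -/
def sphereP (n : ℕ) : RPoly (n + 1) := (∑ i, (X i : RPoly (n + 1)) ^ 2) - 1

/-- The homogenization `K̃` of the set `K`. -/
def Khom {n : ℕ} (E I : Finset ℕ) (c : ℕ → RPoly n) : Set (Fin (n + 1) → ℝ) :=
  {x | (∀ j ∈ E, eval x (homogenize (c j)) = 0) ∧
       (∀ j ∈ I, 0 ≤ eval x (homogenize (c j))) ∧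
       (∑ i, (x i) ^ 2) = 1 ∧ 0 ≤ x 0}

/-- `K` is closed at infinity. -/
def ClosedAtInfinity {n : ℕ} (E I : Finset ℕ) (c : ℕ → RPoly n) : Prop :=
  Khom E I c = closure (Khom E I c ∩ {x | 0 < x 0})

/-- The tuple `c̃_eq`: the homogenizations `c̃_j` together with `‖x̃‖² - 1`
(the latter indexed by `none`). -/
def gEqH {n : ℕ} (c : ℕ → RPoly n) : Option ℕ → RPoly (n + 1) :=
  fun o => o.elim (sphereP n) (fun j => homogenize (c j))

/-- The tuple `c̃_in`: the homogenizations `c̃_j` together with `x_0`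
(the latter indexed by `none`). -/
def gInH {n : ℕ} (c : ℕ → RPoly n) : Option ℕ → RPoly (n + 1) :=
  fun o => o.elim (X 0) (fun j => homogenize (c j))

/-- The index set of a tuple extended by one extra entry (indexed by `none`). -/
def OS (S : Finset ℕ) : Finset (Option ℕ) := insert none (S.image some)

/-- Feasibility of `θ` for the linear conic problem (P). -/
def PFeas {n m : ℕ} (m1 d : ℕ) (f : RPoly n) (a : Fin m → RPoly n)
    (K : Set (Fin n → ℝ)) (θ : Fin m → ℝ) : Prop :=
  (∀ i : Fin m, m1 ≤ (i : ℕ) → 0 ≤ θ i) ∧ (f - ∑ i, C (θ i) * a i) ∈ PdCone d K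

/-- The optimal value `ϑ*` of the linear conic problem (P). -/
def PVal {n m : ℕ} (m1 d : ℕ) (f : RPoly n) (a : Fin m → RPoly n) (b : Fin m → ℝ)
    (K : Set (Fin n → ℝ)) : ℝ :=
  sSup {v : ℝ | ∃ θ : Fin m → ℝ, PFeas m1 d f a K θ ∧ v = ∑ i, b i * θ i}

/-- Feasibility of `y` for the generalized moment problem (M). -/
def MFeas {n m : ℕ} (m1 d : ℕ) (a : Fin m → RPoly n) (b : Fin m → ℝ)
    (K : Set (Fin n → ℝ)) (y : (Fin n →₀ ℕ) → ℝ) : Prop :=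
  InMomentCone d K y ∧
  (∀ i : Fin m, (i : ℕ) < m1 → pairing (a i) y = b i) ∧
  (∀ i : Fin m, m1 ≤ (i : ℕ) → b i ≤ pairing (a i) y)

/-- The optimal value `φ*` of the generalized moment problem (M). -/
def MVal {n m : ℕ} (m1 d : ℕ) (f : RPoly n) (a : Fin m → RPoly n) (b : Fin m → ℝ)
    (K : Set (Fin n → ℝ)) : ℝ :=
  sInf {v : ℝ | ∃ y : (Fin n →₀ ℕ) → ℝ, MFeas m1 d a b K y ∧ v = pairing f y}

/-- The optimal value `ϑ_k` of the `k`th SOS relaxation of (P). -/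
def SOSRelaxVal {n m : ℕ} {ι κ : Type} (m1 : ℕ) (f : RPoly n) (a : Fin m → RPoly n)
    (b : Fin m → ℝ) (Es : Finset ι) (ge : ι → RPoly n) (Is : Finset κ) (gi : κ → RPoly n)
    (k : ℕ) : ℝ :=
  sSup {v : ℝ | ∃ θ : Fin m → ℝ, (∀ i : Fin m, m1 ≤ (i : ℕ) → 0 ≤ θ i) ∧
      (∃ p1 ∈ IdealDeg Es ge (2 * k), ∃ p2 ∈ QModDeg Is gi (2 * k),
        f - ∑ i, C (θ i) * a i = p1 + p2) ∧
      v = ∑ i, b i * θ i}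

/-- The semidefinite constraints of the `k`th moment relaxation:
the localizing vectors of the equality constraints vanish, and the localizing
matrices of the inequality constraints and the moment matrix are positive
semidefinite (stated equivalently via the associated quadratic forms). -/
def MomRelaxPSD {n : ℕ} {ι κ : Type} (Es : Finset ι) (ge : ι → RPoly n)
    (Is : Finset κ) (gi : κ → RPoly n) (k : ℕ) (w : (Fin n →₀ ℕ) → ℝ) : Prop :=
  (∀ j ∈ Es, ∀ p : RPoly n, p.totalDegree + (ge j).totalDegree ≤ 2 * k →
      pairing (ge j * p) w = 0) ∧
  (∀ j ∈ Is, ∀ p : RPoly n, p.totalDegree + ((gi j).totalDegree + 1) / 2 ≤ k →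
      0 ≤ pairing (gi j * p ^ 2) w) ∧
  (∀ p : RPoly n, p.totalDegree ≤ k → 0 ≤ pairing (p ^ 2) w)

/-- Feasibility of `w` for the `k`th moment relaxation of (M). -/
def GMomFeas {n m : ℕ} {ι κ : Type} (m1 : ℕ) (a : Fin m → RPoly n) (b : Fin m → ℝ)
    (Es : Finset ι) (ge : ι → RPoly n) (Is : Finset κ) (gi : κ → RPoly n) (k : ℕ)
    (w : (Fin n →₀ ℕ) → ℝ) : Prop :=
  (∀ i : Fin m, (i : ℕ) < m1 → pairing (a i) w = b i) ∧
  (∀ i : Fin m, m1 ≤ (i : ℕ) → b i ≤ pairing (a i) w) ∧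
  MomRelaxPSD Es ge Is gi k w

/-- The optimal value `φ_k` of the `k`th moment relaxation of (M). -/
def GMomVal {n m : ℕ} {ι κ : Type} (m1 : ℕ) (f : RPoly n) (a : Fin m → RPoly n)
    (b : Fin m → ℝ) (Es : Finset ι) (ge : ι → RPoly n) (Is : Finset κ) (gi : κ → RPoly n)
    (k : ℕ) : ℝ :=
  sInf {v : ℝ | ∃ w : (Fin n →₀ ℕ) → ℝ,
      GMomFeas m1 a b Es ge Is gi k w ∧ v = pairing f w}

/-- The optimal value `f_k^den` of the `k`th order relaxation with denominators. -/
def DenRelaxVal {n : ℕ} (E I : Finset ℕ) (c : ℕ → RPoly n) (f : RPoly n) (d k : ℕ) : ℝ :=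
  sSup {γ : ℝ | ∃ p1 ∈ IdealDeg E c (2 * k + d), ∃ p2 ∈ QModDeg I c (2 * k + d),
      (1 + ∑ i, (X i : RPoly n) ^ 2) ^ k * (f - C γ) = p1 + p2}


/-- The degree bound `d_K = max_j ⌈deg(c_j)/2⌉`. -/
def dKOrig {n : ℕ} (E I : Finset ℕ) (c : ℕ → RPoly n) : ℕ :=
  (E ∪ I).sup fun j => ((c j).totalDegree + 1) / 2

/-- The degree bound `d_0` for the GMP relaxations. -/
def d0GMP {n m : ℕ} (f : RPoly n) (a : Fin m → RPoly n) (E I : Finset ℕ)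
    (c : ℕ → RPoly n) : ℕ :=
  max ((f.totalDegree + 1) / 2)
    (max (dKOrig E I c) (Finset.univ.sup fun i : Fin m => ((a i).totalDegree + 1) / 2))

/-- The degree bound `d̃_K` for the homogenized constraining tuples. -/
def dKHom {n : ℕ} (E I : Finset ℕ) (c : ℕ → RPoly n) : ℕ :=
  max ((OS E).sup fun o => ((gEqH c o).totalDegree + 1) / 2)
      ((OS I).sup fun o => ((gInH c o).totalDegree + 1) / 2)

end

/-!
Homogenizing turns `f - f_min` into the form `F = f̃ - f_min x₀ᵈ`, which is nonnegative on `K̃`.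
As `f^hm` is positive definite, `d` is even and `F` has no zeros at infinity, so every zero of `F`
has `x₀ ≠ 0`. Multiplying constraints of odd degree by `x₀` makes them even; the constraint `x₀ ≥ 0`
can then be dropped, at the cost of adding the antipode of every zero.

The quadratic module of these constraints on the unit sphere is archimedean. At a zero of `F` the
second order conditions provide an element `s` of the module such that `F - s` vanishes to second
order with positive definite Hessian. In particular the zeros are finitely many, and the elements
`s` glue to a single `S` in the module such that `G = F - S` has this property at all zeros and is
positive elsewhere. If `G` were not in the module, some pure state, defined on an ideal between
the square of the vanishing ideal of the zeros and the whole ring, would be nonpositive at `G`. But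
a pure state is a positive multiple of the evaluation at a point outside the zeros, or a nonzero
positive functional on the second order jets at one of them, and both are positive at `G`.

Finally, evaluating a certificate at the points `t (1, x)` with `t² θ(x) = 1`, averaging over the
two roots `±t` and multiplying by a power of `θ` gives a certificate with denominator.
-/

section OrderUnit

variable {V : Type*} [AddCommGroup V] [Module ℝ V] {P : PointedCone ℝ V} {w : V}

/-- `w` is an order unit of the convex cone `P`: it lies in `P` and absorbs every vector. -/
structure IsOrderUnit (P : PointedCone ℝ V) (w : V) : Prop where
  mem : w ∈ P
  exists_smul_add_mem (v : V) : ∃ R : ℝ, R • w + v ∈ P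

/-- The states of `(V, P, w)`: the linear functionals that are nonnegative on `P` and normalized
at `w`. They are bare functions, so that the product topology is that of pointwise convergence. -/
def stateSet (P : PointedCone ℝ V) (w : V) : Set (V → ℝ) :=
  {φ | φ ∈ Set.range ((↑) : (V →ₗ[ℝ] ℝ) → V → ℝ) ∧ (∀ v ∈ P, 0 ≤ φ v) ∧ φ w = 1}

theorem IsOrderUnit.nonneg_of_smul_add_smul_mem (hw : IsOrderUnit P w) {G : V} (hG : G ∉ P)
    {c t : ℝ} (ht : 0 ≤ t) (h : c • w + t • G ∈ P) : 0 ≤ c := by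
  by_contra! hc
  obtain ⟨R, hR⟩ := hw.exists_smul_add_mem G
  have hN : 0 ≤ |R| / -c := div_nonneg (abs_nonneg R) (by linarith)
  have hpos : 0 < 1 + |R| / -c * t := by positivity
  have hcomb : (1 + |R| / -c * t) • G =
      (R • w + G) + (|R| / -c) • (c • w + t • G) + (|R| - R) • w := by
    have : |R| / -c * c = -|R| := by rw [div_neg, neg_mul, div_mul_cancel₀ _ hc.ne]
    simp only [smul_add, smul_smul, this, add_smul, sub_smul, neg_smul, one_smul]
    abel
  have hmem : (1 + |R| / -c * t) • G ∈ P := by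
    rw [hcomb]
    exact add_mem (add_mem hR (P.smul_mem hN h))
      (P.smul_mem (sub_nonneg.2 (le_abs_self R)) hw.mem)
  refine hG ?_
  simpa [smul_smul, inv_mul_cancel₀ hpos.ne'] using
    P.smul_mem (inv_nonneg.2 hpos.le) hmem

theorem IsOrderUnit.exists_state_nonpos (hw : IsOrderUnit P w) {G : V} (hG : G ∉ P) :
    ∃ φ ∈ stateSet P w, φ G ≤ 0 := by
  have hw0 : w ≠ 0 := by
    rintro rfl
    obtain ⟨R, hR⟩ := hw.exists_smul_add_mem G
    exact hG (by simpa using hR)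
  obtain ⟨φ, hφw, hφ⟩ := riesz_extension (P ⊔ Submodule.span _ {-G})
    (LinearPMap.mkSpanSingleton w (1 : ℝ) hw0) (by
      rintro ⟨x, hx⟩ hxP
      obtain ⟨c, rfl⟩ := Submodule.mem_span_singleton.1 hx
      obtain ⟨p, hp, z, hz, hpz⟩ := Submodule.mem_sup.1 hxP
      obtain ⟨⟨t, ht⟩, rfl⟩ := Submodule.mem_span_singleton.1 hz
      rw [LinearPMap.mkSpanSingleton'_apply, RingHom.id_apply, smul_eq_mul, mul_one]
      refine hw.nonneg_of_smul_add_smul_mem hG ht ?_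
      have : p = c • w + t • G := by
        rw [← eq_sub_iff_add_eq, Nonneg.mk_smul] at hpz
        rw [hpz, smul_neg, sub_neg_eq_add]
      rwa [← this]) (fun v => by
      obtain ⟨R, hR⟩ := hw.exists_smul_add_mem v
      exact ⟨⟨R • w, Submodule.mem_span_singleton.2 ⟨R, rfl⟩⟩, Submodule.mem_sup_left hR⟩)
  refine ⟨φ, ⟨⟨φ, rfl⟩, fun v hv => hφ v (Submodule.mem_sup_left hv), ?_⟩, ?_⟩
  · exact (hφw ⟨w, Submodule.mem_span_singleton_self w⟩).trans
      (LinearPMap.mkSpanSingleton_apply ..)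
  · simpa using hφ (-G) (Submodule.mem_sup_right (Submodule.mem_span_singleton_self _))

theorem isClosed_stateSet (P : PointedCone ℝ V) (w : V) : IsClosed (stateSet P w) := by
  have hnonneg : IsClosed {φ : V → ℝ | ∀ v ∈ P, 0 ≤ φ v} := by
    simp only [Set.ofPred_forall]
    exact isClosed_biInter fun v _ => isClosed_le continuous_const (continuous_apply v)
  exact (LinearMap.isClosed_range_coe V ℝ (RingHom.id ℝ)).inter
    (hnonneg.inter (isClosed_eq (continuous_apply w) continuous_const))

theorem IsOrderUnit.isCompact_stateSet (hw : IsOrderUnit P w) : IsCompact (stateSet P w) := by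
  choose R hR using hw.exists_smul_add_mem
  refine (isCompact_univ_pi fun v => isCompact_Icc (a := -R v) (b := R (-v))).of_isClosed_subset
    (isClosed_stateSet P w) ?_
  rintro _ ⟨⟨L, rfl⟩, hL, hLw⟩ v -
  have h1 := hL _ (hR v)
  have h2 := hL _ (hR (-v))
  simp only [map_add, map_smul, hLw, map_neg, smul_eq_mul, mul_one] at h1 h2
  constructor <;> linarith

theorem exists_mem_extremePoints_le {E : Type*} [AddCommGroup E] [Module ℝ E]
    [TopologicalSpace E] [T2Space E] [IsTopologicalAddGroup E] [ContinuousSMul ℝ E]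
    [LocallyConvexSpace ℝ E] {s : Set E} (hs : IsCompact s) {x : E} (hx : x ∈ s)
    (l : StrongDual ℝ E) : ∃ y ∈ s.extremePoints ℝ, l y ≤ l x := by
  have hexp : IsExposed ℝ s ((-l).toExposed s) := ContinuousLinearMap.toExposed.isExposed
  obtain ⟨z, hz, hzmax⟩ := hs.exists_isMaxOn ⟨x, hx⟩ (-l).continuous.continuousOn
  obtain ⟨y, hy⟩ := (hexp.isCompact hs).extremePoints_nonempty ⟨z, hz, fun v hv => hzmax hv⟩
  exact ⟨y, hexp.isExtreme.extremePoints_subset_extremePoints hy,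
    neg_le_neg_iff.1 (hy.1.2 x hx)⟩

theorem IsOrderUnit.eq_zero_of_nonneg_of_apply_eq_zero (hw : IsOrderUnit P w) {φ : V →ₗ[ℝ] ℝ}
    (hφ : ∀ v ∈ P, 0 ≤ φ v) (hφw : φ w = 0) : φ = 0 := by
  have hnonneg (v : V) : 0 ≤ φ v := by
    obtain ⟨R, hR⟩ := hw.exists_smul_add_mem v
    simpa [hφw] using hφ _ hR
  ext v
  exact le_antisymm (by simpa using hnonneg (-v)) (hnonneg v)

/-- A linear map between `0` and the identity acts on an extreme state as a scalar, since it
splits the state into a convex combination of two others. -/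
theorem IsOrderUnit.extremeState_apply (hw : IsOrderUnit P w) {φ : V →ₗ[ℝ] ℝ}
    (hφ : ⇑φ ∈ (stateSet P w).extremePoints ℝ) {T : V →ₗ[ℝ] V} (hT : ∀ v ∈ P, T v ∈ P)
    (hT' : ∀ v ∈ P, v - T v ∈ P) (v : V) : φ (T v) = φ (T w) * φ v := by
  obtain ⟨⟨-, hpos, hone⟩, hext⟩ := hφ
  set A : V →ₗ[ℝ] ℝ := φ ∘ₗ T with hA
  have hApos (v : V) (hv : v ∈ P) : 0 ≤ A v := hpos _ (hT v hv)
  have hBpos (v : V) (hv : v ∈ P) : 0 ≤ (φ - A) v := by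
    simpa [hA] using hpos _ (hT' v hv)
  have hBw : (φ - A) w = 1 - A w := by rw [LinearMap.sub_apply, hone]
  have hstate {ψ : V →ₗ[ℝ] ℝ} (hψ : ∀ v ∈ P, 0 ≤ ψ v) (hψw : 0 < ψ w) :
      ⇑((ψ w)⁻¹ • ψ) ∈ stateSet P w :=
    ⟨⟨_, rfl⟩, fun v hv => mul_nonneg (inv_nonneg.2 hψw.le) (hψ v hv), inv_mul_cancel₀ hψw.ne'⟩
  change A v = A w * φ v
  rcases (hApos w hw.mem).eq_or_lt with hA0 | hA0
  · simp [hw.eq_zero_of_nonneg_of_apply_eq_zero hApos hA0.symm]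
  rcases (hBpos w hw.mem).eq_or_lt with hB0 | hB0
  · have hφA := sub_eq_zero.1 (hw.eq_zero_of_nonneg_of_apply_eq_zero hBpos hB0.symm)
    rw [← hφA, hone, one_mul]
  · have hsplit : ⇑φ ∈ openSegment ℝ (⇑((A w)⁻¹ • A)) ⇑(((φ - A) w)⁻¹ • (φ - A)) := by
      refine ⟨A w, (φ - A) w, hA0, hB0, by rw [hBw]; ring, ?_⟩
      rw [LinearMap.coe_smul, LinearMap.coe_smul, smul_inv_smul₀ hA0.ne', smul_inv_smul₀ hB0.ne']
      exact add_sub_cancel _ _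
    have hAφ := congrFun (hext (hstate hApos hA0) (hstate hBpos hB0) hsplit) v
    rw [← hAφ]
    exact (mul_inv_cancel_left₀ hA0.ne' (A v)).symm

end OrderUnit

section ArchimedeanModule

variable {A : Type*} [CommRing A] {M : AddSubmonoid A}

/-- The semiring of all elements that multiply `M` into itself. -/
def multipliers (M : AddSubmonoid A) : Subsemiring A where
  carrier := {t | ∀ m ∈ M, t * m ∈ M}
  mul_mem' ha hb m hm := by
    rw [mul_assoc]
    exact ha _ (hb m hm)
  one_mem' m hm := by rwa [one_mul]
  add_mem' ha hb m hm := by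
    rw [add_mul]
    exact add_mem (ha m hm) (hb m hm)
  zero_mem' m _ := by
    rw [zero_mul]
    exact zero_mem M

/-- A quadratic module: it contains `1` and is closed under multiplication by squares. -/
structure IsQuadraticModule (M : AddSubmonoid A) : Prop where
  one_mem : 1 ∈ M
  sq_mem_multipliers (a : A) : a ^ 2 ∈ multipliers M

namespace IsQuadraticModule

theorem mem_of_mem_multipliers (hM : IsQuadraticModule M) {t : A} (ht : t ∈ multipliers M) :
    t ∈ M := by
  simpa using ht 1 hM.one_mem

theorem sq_mem (hM : IsQuadraticModule M) (a : A) : a ^ 2 ∈ M :=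
  hM.mem_of_mem_multipliers (hM.sq_mem_multipliers a)

variable [Algebra ℝ A]

theorem algebraMap_mem_multipliers (hM : IsQuadraticModule M) {r : ℝ} (hr : 0 ≤ r) :
    algebraMap ℝ A r ∈ multipliers M := by
  rw [← Real.sq_sqrt hr, map_pow]
  exact hM.sq_mem_multipliers _

theorem smul_mem (hM : IsQuadraticModule M) {r : ℝ} (hr : 0 ≤ r) {m : A} (hm : m ∈ M) :
    r • m ∈ M := by
  rw [Algebra.smul_def]
  exact hM.algebraMap_mem_multipliers hr m hm

theorem smul_mem_iff (hM : IsQuadraticModule M) {r : ℝ} (hr : 0 < r) {m : A} :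
    r • m ∈ M ↔ m ∈ M :=
  ⟨fun h => by simpa [smul_smul, hr.ne'] using hM.smul_mem (inv_nonneg.2 hr.le) h,
    hM.smul_mem hr.le⟩

theorem smul_sub_mul_mem (hM : IsQuadraticModule M) {a b w : A} {R S : ℝ}
    (ha : algebraMap ℝ A R - a ∈ multipliers M) (ha' : algebraMap ℝ A R + a ∈ multipliers M)
    (hb : S • w - b ∈ M) (hb' : S • w + b ∈ M) : (R * S) • w - a * b ∈ M := by
  rw [← hM.smul_mem_iff two_pos]
  have hsplit : (2 : ℝ) • ((R * S) • w - a * b) =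
      (algebraMap ℝ A R + a) * (S • w - b) + (algebraMap ℝ A R - a) * (S • w + b) := by
    simp only [Algebra.smul_def, map_mul, map_ofNat]
    ring
  rw [hsplit]
  exact add_mem (ha' _ hb) (ha _ hb')

theorem sub_mul_mem_of_one_sub_sq_mem (hM : IsQuadraticModule M) {a m : A}
    (ha : 1 - a ^ 2 ∈ multipliers M) (hm : m ∈ M) : m - a * m ∈ M := by
  rw [← hM.smul_mem_iff two_pos]
  convert add_mem (hM.sq_mem_multipliers (1 - a) m hm) (ha m hm) using 1
  simp only [ofNat_smul_eq_nsmul, nsmul_eq_mul]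
  push_cast
  ring

/-- The elements of a quadratic module that lie in an ideal, as a convex cone in the ideal. -/
def coneIn (hM : IsQuadraticModule M) (J : Ideal A) : PointedCone ℝ (J.restrictScalars ℝ) where
  carrier := Subtype.val ⁻¹' M
  add_mem' ha hb := M.add_mem ha hb
  zero_mem' := M.zero_mem
  smul_mem' r _ hb := hM.smul_mem r.2 hb

end IsQuadraticModule

variable [Algebra ℝ A]

/-- An archimedean quadratic module, in the strong sense that the bounds `R - a` are not merely
elements but multipliers of the module. -/
structure IsArchimedeanModule (M : AddSubmonoid A) : Prop extends IsQuadraticModule M where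
  exists_sub_mem_multipliers (a : A) : ∃ R : ℝ, algebraMap ℝ A R - a ∈ multipliers M

namespace IsArchimedeanModule

theorem exists_sub_add_mem_multipliers (hM : IsArchimedeanModule M) (a : A) :
    ∃ R : ℝ, 0 < R ∧ algebraMap ℝ A R - a ∈ multipliers M ∧
      algebraMap ℝ A R + a ∈ multipliers M := by
  obtain ⟨R, hR⟩ := hM.exists_sub_mem_multipliers a
  obtain ⟨S, hS⟩ := hM.exists_sub_mem_multipliers (-a)
  have hmono {T r : ℝ} {b : A} (h : algebraMap ℝ A r - b ∈ multipliers M) (hr : r ≤ T) :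
      algebraMap ℝ A T - b ∈ multipliers M := by
    have := add_mem (hM.algebraMap_mem_multipliers (sub_nonneg.2 hr)) h
    rwa [map_sub, sub_add_sub_cancel] at this
  refine ⟨max 1 (max R S), by positivity, hmono hR (by simp), ?_⟩
  rw [← sub_neg_eq_add]
  exact hmono hS (by simp)

/-- The ideal of the elements bounded, with respect to `M`, by a multiple of `w`. -/
def boundedIdeal (hM : IsArchimedeanModule M) (w : A) : Ideal A where
  carrier := {b | ∃ R : ℝ, R • w - b ∈ M ∧ R • w + b ∈ M}
  add_mem' := by
    rintro p q ⟨R, hp, hp'⟩ ⟨S, hq, hq'⟩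
    refine ⟨R + S, ?_, ?_⟩
    · rw [add_smul, add_sub_add_comm]
      exact add_mem hp hq
    · rw [add_smul, add_add_add_comm]
      exact add_mem hp' hq'
  zero_mem' := ⟨0, by simp, by simp⟩
  smul_mem' := by
    rintro a b ⟨S, hb, hb'⟩
    obtain ⟨R, -, ha, ha'⟩ := hM.exists_sub_add_mem_multipliers a
    refine ⟨R * S, hM.smul_sub_mul_mem ha ha' hb hb', ?_⟩
    have := hM.smul_sub_mul_mem (b := -b) ha ha' (by rwa [sub_neg_eq_add])
      (by rwa [← sub_eq_add_neg])
    rwa [mul_neg, sub_neg_eq_add] at this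

theorem isOrderUnit_coneIn (hM : IsArchimedeanModule M) {w : A} (hw : w ∈ M)
    (hwJ : w ∈ hM.boundedIdeal w) :
    IsOrderUnit (hM.coneIn (hM.boundedIdeal w)) ⟨w, hwJ⟩ where
  mem := hw
  exists_smul_add_mem := fun ⟨_, R, _, hR⟩ => ⟨R, hR⟩

theorem extremeState_smul (hM : IsArchimedeanModule M) {J : Ideal A} {w : J.restrictScalars ℝ}
    (hw : IsOrderUnit (hM.coneIn J) w) {φ : J.restrictScalars ℝ →ₗ[ℝ] ℝ}
    (hφ : ⇑φ ∈ (stateSet (hM.coneIn J) w).extremePoints ℝ) (a : A) (b : J.restrictScalars ℝ) :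
    φ (a • b) = φ (a • w) * φ b := by
  have hmul {t : A} (ht : t ∈ multipliers M) (ht' : 1 - t ∈ multipliers M) :
      φ (t • b) = φ (t • w) * φ b :=
    hw.extremeState_apply hφ (T := Algebra.lsmul ℝ ℝ (J.restrictScalars ℝ) t) (fun v hv => ht v hv)
      (fun v hv => by
        have := ht' v hv
        rwa [sub_mul, one_mul] at this) b
  obtain ⟨R, hR, ha, ha'⟩ := hM.exists_sub_add_mem_multipliers a
  have hscale {t : A} (ht : t ∈ multipliers M) :
      algebraMap ℝ A (2 * R)⁻¹ * t ∈ multipliers M :=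
    mul_mem (hM.algebraMap_mem_multipliers (by positivity)) ht
  have hcompl : 1 - algebraMap ℝ A (2 * R)⁻¹ * (algebraMap ℝ A R + a) =
      algebraMap ℝ A (2 * R)⁻¹ * (algebraMap ℝ A R - a) := by
    have : algebraMap ℝ A (2 * R)⁻¹ * (2 * algebraMap ℝ A R) = 1 := by
      rw [← map_ofNat (algebraMap ℝ A) 2, ← map_mul, ← map_mul, inv_mul_cancel₀ (by positivity),
        map_one]
    linear_combination -this
  have hb := hmul (hscale ha') (hcompl ▸ hscale ha)
  have hφw : φ w = 1 := hφ.1.2.2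
  simp only [mul_smul, algebraMap_smul, map_smul, add_smul, map_add, hφw, smul_eq_mul] at hb
  have : (2 * R)⁻¹ ≠ 0 := by positivity
  field_simp at hb
  linarith

theorem exists_pureState (hM : IsArchimedeanModule M) {w G : A} (hw : w ∈ multipliers M)
    (hGw : G ∈ hM.boundedIdeal w) (hG : G ∉ M) :
    ∃ (ψ : A →ₗ[ℝ] ℝ) (χ : A →ₐ[ℝ] ℝ), (∀ m ∈ M, m ∈ hM.boundedIdeal w → 0 ≤ ψ m) ∧
      ψ w = 1 ∧ ψ G ≤ 0 ∧ (∀ m ∈ M, 0 ≤ χ m) ∧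
      ∀ a, ∀ b ∈ hM.boundedIdeal w, ψ (a * b) = χ a * ψ b := by
  have hwM := hM.mem_of_mem_multipliers hw
  have hwJ : w ∈ hM.boundedIdeal w :=
    ⟨1, by simp, by simpa using add_mem hwM hwM⟩
  have hunit := hM.isOrderUnit_coneIn hwM hwJ
  obtain ⟨φ₀, hφ₀, hφ₀G⟩ :=
    hunit.exists_state_nonpos (G := ⟨G, hGw⟩) (show ¬ (G : A) ∈ M from hG)
  obtain ⟨_, hφ, hφG⟩ := exists_mem_extremePoints_le hunit.isCompact_stateSet hφ₀
    (ContinuousLinearMap.proj ⟨G, hGw⟩)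
  obtain ⟨φ, rfl⟩ := hφ.1.1
  have hφmul := hM.extremeState_smul hunit hφ
  obtain ⟨⟨-, hpos, hone⟩, -⟩ := hφ
  obtain ⟨ψ, hψ⟩ := φ.exists_extend
  have hψφ (b : A) (hb : b ∈ hM.boundedIdeal w) : ψ b = φ ⟨b, hb⟩ := by
    rw [← hψ]
    rfl
  have hψmul (a b : A) (hb : b ∈ hM.boundedIdeal w) : ψ (a * b) = ψ (a * w) * ψ b := by
    rw [hψφ b hb, hψφ _ (Ideal.mul_mem_left _ a hb), hψφ _ (Ideal.mul_mem_left _ a hwJ)]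
    exact hφmul a ⟨b, hb⟩
  let χ : A →ₐ[ℝ] ℝ := AlgHom.ofLinearMap (ψ ∘ₗ LinearMap.mulRight ℝ w)
    (by simpa [hψφ w hwJ] using hone) (fun a b => by
      simpa [mul_assoc] using hψmul a (b * w) (Ideal.mul_mem_left _ b hwJ))
  refine ⟨ψ, χ, fun m hm hmJ => ?_, ?_, ?_, fun m hm => ?_, hψmul⟩
  · rw [hψφ m hmJ]
    exact hpos _ hm
  · rw [hψφ w hwJ, hone]
  · rw [hψφ G hGw]
    exact hφG.trans hφ₀G
  · change 0 ≤ ψ (m * w)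
    rw [hψφ _ (Ideal.mul_mem_left _ m hwJ)]
    exact hpos _ (show m * w ∈ M from mul_comm w m ▸ hw m hm)

theorem span_sq_le_boundedIdeal (hM : IsArchimedeanModule M) (s : Finset A) :
    Ideal.span (s : Set A) ^ 2 ≤ hM.boundedIdeal (∑ p ∈ s, p ^ 2) := by
  rw [sq, Ideal.span_mul_span', Ideal.span_le]
  rintro _ ⟨p, hp, q, hq, rfl⟩
  have hsub {r : A} (hr : r ∈ s) : ∑ p ∈ s, p ^ 2 - r ^ 2 ∈ M := by
    classical
    rw [← Finset.add_sum_erase s _ hr, add_sub_cancel_left]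
    exact sum_mem fun p _ => hM.sq_mem p
  refine ⟨1, ?_, ?_⟩
  · rw [← hM.smul_mem_iff two_pos]
    convert add_mem (hM.sq_mem (p - q)) (add_mem (hsub hp) (hsub hq)) using 1
    simp only [one_smul, ofNat_smul_eq_nsmul, nsmul_eq_mul]
    push_cast
    ring
  · rw [← hM.smul_mem_iff two_pos]
    convert add_mem (hM.sq_mem (p + q)) (add_mem (hsub hp) (hsub hq)) using 1
    simp only [one_smul, ofNat_smul_eq_nsmul, nsmul_eq_mul]
    push_cast
    ring

end IsArchimedeanModule

variable {σ : Type*} {M : AddSubmonoid (MvPolynomial σ ℝ)}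

theorem IsQuadraticModule.isArchimedeanModule_of_one_sub_sq_mem (hM : IsQuadraticModule M)
    (hX : ∀ i, 1 - X i ^ 2 ∈ multipliers M) : IsArchimedeanModule M where
  toIsQuadraticModule := hM
  exists_sub_mem_multipliers p := by
    suffices h : ∃ R : ℝ, C R - p ∈ multipliers M ∧ C R + p ∈ multipliers M from
      h.imp fun _ hR => hR.1
    induction p using MvPolynomial.induction_on with
    | C r =>
      refine ⟨|r|, ?_, ?_⟩
      · rw [← C_sub]
        exact hM.algebraMap_mem_multipliers (sub_nonneg.2 (le_abs_self r))
      · rw [← C_add]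
        exact hM.algebraMap_mem_multipliers (by linarith [neg_abs_le r])
    | add p q hp hq =>
      obtain ⟨R, hp, hp'⟩ := hp
      obtain ⟨S, hq, hq'⟩ := hq
      refine ⟨R + S, ?_, ?_⟩
      · rw [C_add, add_sub_add_comm]
        exact add_mem hp hq
      · rw [C_add, add_add_add_comm]
        exact add_mem hp' hq'
    | mul_X p i hp =>
      obtain ⟨R, hp, hp'⟩ := hp
      have hXi (m : MvPolynomial σ ℝ) (hm : m ∈ M) : m - X i * m ∈ M :=
        hM.sub_mul_mem_of_one_sub_sq_mem (hX i) hm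
      have hXi' (m : MvPolynomial σ ℝ) (hm : m ∈ M) : m + X i * m ∈ M := by
        simpa using hM.sub_mul_mem_of_one_sub_sq_mem (a := -X i) (by simpa using hX i) hm
      refine ⟨R, fun m hm => ?_, fun m hm => ?_⟩
      · have := hM.smul_sub_mul_mem (w := m) (b := X i * m) (S := 1) hp hp'
          (by simpa using hXi m hm) (by simpa using hXi' m hm)
        simpa [sub_mul, mul_assoc, smul_eq_C_mul] using this
      · have := hM.smul_sub_mul_mem (w := m) (b := -(X i * m)) (S := 1) hp hp'
          (by simpa using hXi' m hm) (by simpa [← sub_eq_add_neg] using hXi m hm)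
        simpa [add_mul, mul_assoc, smul_eq_C_mul] using this

theorem IsQuadraticModule.isArchimedeanModule_of_sphere [Fintype σ] (hM : IsQuadraticModule M)
    (hsph : ∀ q, (∑ i, X i ^ 2 - 1) * q ∈ M) : IsArchimedeanModule M := by
  classical
  refine hM.isArchimedeanModule_of_one_sub_sq_mem fun i => ?_
  have hsplit : (1 - X i ^ 2 : MvPolynomial σ ℝ) =
      ∑ j ∈ Finset.univ.erase i, X j ^ 2 + (∑ j, X j ^ 2 - 1) * (-1) := by
    rw [← Finset.add_sum_erase Finset.univ _ (Finset.mem_univ i)]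
    ring
  rw [hsplit]
  refine add_mem (sum_mem fun j _ => hM.sq_mem_multipliers _) fun m _ => ?_
  rw [mul_assoc]
  exact hsph _

end ArchimedeanModule

section PointIdeal

variable {σ : Type*}

/-- The maximal ideal of the polynomials vanishing at the point `u`. -/
noncomputable def pointIdeal (u : σ → ℝ) : Ideal (MvPolynomial σ ℝ) :=
  RingHom.ker (eval u)

theorem mem_pointIdeal {u : σ → ℝ} {p : MvPolynomial σ ℝ} : p ∈ pointIdeal u ↔ eval u p = 0 :=
  RingHom.mem_ker

theorem X_sub_C_mem_pointIdeal (u : σ → ℝ) (i : σ) : X i - C (u i) ∈ pointIdeal u := by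
  simp [mem_pointIdeal]

theorem pointIdeal_eq_span (u : σ → ℝ) :
    pointIdeal u = Ideal.span (Set.range fun i => X i - C (u i)) := by
  set J : Ideal (MvPolynomial σ ℝ) := Ideal.span (Set.range fun i => X i - C (u i)) with hJ
  have hcoord (i : σ) : X i - C (u i) ∈ J := Ideal.subset_span ⟨i, rfl⟩
  have hsub (p : MvPolynomial σ ℝ) : p - C (eval u p) ∈ J := by
    induction p using MvPolynomial.induction_on with
    | C c => simp
    | add p q hp hq =>
      convert add_mem hp hq using 1
      simp only [map_add]
      ring
    | mul_X p i hp =>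
      convert add_mem (J.mul_mem_right (X i) hp) (J.mul_mem_left (C (eval u p)) (hcoord i)) using 1
      simp only [map_mul, eval_X]
      ring
  refine le_antisymm (fun p hp => ?_) ?_
  · simpa [mem_pointIdeal.1 hp] using hsub p
  · rw [hJ, Ideal.span_le]
    rintro _ ⟨i, rfl⟩
    exact X_sub_C_mem_pointIdeal u i

theorem isMaximal_pointIdeal (u : σ → ℝ) : (pointIdeal u).IsMaximal :=
  RingHom.ker_isMaximal_of_surjective _ fun r => ⟨C r, eval_C r⟩

theorem eq_of_pointIdeal_le {u v : σ → ℝ} (h : pointIdeal u ≤ pointIdeal v) : u = v := by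
  funext i
  have hi := mem_pointIdeal.1 (h (X_sub_C_mem_pointIdeal u i))
  rw [map_sub, eval_X, eval_C, sub_eq_zero] at hi
  exact hi.symm

theorem isCoprime_pointIdeal_pow_prod {u : σ → ℝ} {t : Finset (σ → ℝ)} (hu : u ∉ t) (k : ℕ) :
    IsCoprime (pointIdeal u ^ k) (∏ v ∈ t, pointIdeal v ^ k) := by
  refine IsCoprime.prod_right fun v hv => IsCoprime.pow ?_
  have := isMaximal_pointIdeal u
  have := isMaximal_pointIdeal v
  exact Ideal.isCoprime_of_isMaximal fun h => hu (eq_of_pointIdeal_le h.le ▸ hv)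

theorem mem_prod_pointIdeal_pow {t : Finset (σ → ℝ)} {k : ℕ} {p : MvPolynomial σ ℝ}
    (hp : ∀ u ∈ t, p ∈ pointIdeal u ^ k) : p ∈ (∏ u ∈ t, pointIdeal u) ^ k := by
  classical
  rw [← Finset.prod_pow]
  induction t using Finset.induction_on with
  | empty => simp
  | insert u t hu ih =>
    rw [Finset.prod_insert hu, Ideal.mul_eq_inf_of_isCoprime (isCoprime_pointIdeal_pow_prod hu k)]
    exact ⟨hp u (Finset.mem_insert_self u t), ih fun v hv => hp v (Finset.mem_insert_of_mem hv)⟩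

theorem exists_sub_one_mem_pointIdeal_sq (t : Finset (σ → ℝ)) (u : σ → ℝ) :
    ∃ e : MvPolynomial σ ℝ, e - 1 ∈ pointIdeal u ^ 2 ∧ ∀ v ∈ t, v ≠ u → e ∈ pointIdeal v ^ 2 := by
  classical
  obtain ⟨a, ha, e, he, hae⟩ := Ideal.isCoprime_iff_exists.1
    (isCoprime_pointIdeal_pow_prod (Finset.notMem_erase u t) 2)
  refine ⟨e, ?_, fun v hv hvu => ?_⟩
  · rw [show e - 1 = -a by linear_combination hae]
    exact neg_mem ha
  · exact Ideal.prod_le_inf.trans (Finset.inf_le (Finset.mem_erase.2 ⟨hvu, hv⟩)) he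

theorem mul_sub_one_mem {A : Type*} [CommRing A] {J : Ideal A} {a b : A} (ha : a - 1 ∈ J)
    (hb : b - 1 ∈ J) : a * b - 1 ∈ J := by
  rw [show a * b - 1 = a * (b - 1) + (a - 1) by ring]
  exact add_mem (J.mul_mem_left _ hb) ha

theorem pow_sub_one_mem {A : Type*} [CommRing A] {J : Ideal A} {a : A} (ha : a - 1 ∈ J) (k : ℕ) :
    a ^ k - 1 ∈ J :=
  J.mem_of_dvd (sub_one_dvd_pow_sub_one a k) ha

variable [Fintype σ]

theorem eval_sub_eval_isBigO (u : σ → ℝ) (p : MvPolynomial σ ℝ) :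
    (fun x => eval x p - eval u p) =O[nhds u] fun x => ‖x - u‖ := by
  induction p using MvPolynomial.induction_on with
  | C c => simpa using Asymptotics.isBigO_zero _ _
  | add p q hp hq =>
    refine (hp.add hq).congr_left fun x => ?_
    simp only [map_add]
    ring
  | mul_X p i hp =>
    have hbdd : (fun x : σ → ℝ => x i) =O[nhds u] fun _ => (1 : ℝ) :=
      ((continuous_apply i).tendsto u).isBigO_one ℝ
    have hcoord : (fun x : σ → ℝ => x i - u i) =O[nhds u] fun x => ‖x - u‖ :=
      Asymptotics.isBigO_of_le _ fun x => by
        rw [norm_norm]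
        exact norm_le_pi_norm (x - u) i
    have hmul := ((hp.mul hbdd).congr_right fun _ => mul_one _).add
      (hcoord.const_mul_left (eval u p))
    refine hmul.congr_left fun x => ?_
    simp only [map_mul, eval_X]
    ring

theorem eval_isBigO_of_mem_pointIdeal_pow {u : σ → ℝ} {k : ℕ} {p : MvPolynomial σ ℝ}
    (hp : p ∈ pointIdeal u ^ k) : (fun x => eval x p) =O[nhds u] fun x => ‖x - u‖ ^ k := by
  induction k generalizing p with
  | zero =>
    simp only [pow_zero]
    exact ((MvPolynomial.continuous_eval p).tendsto u).isBigO_one ℝ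
  | succ k ih =>
    rw [pow_succ] at hp
    refine Submodule.mul_induction_on hp (fun a ha b hb => ?_) fun a b ha hb => ?_
    · have hb' := eval_sub_eval_isBigO u b
      simp only [mem_pointIdeal.1 hb, sub_zero] at hb'
      simpa only [map_mul, pow_succ] using (ih ha).mul hb'
    · simpa only [map_add] using ha.add hb

end PointIdeal

section PosDefJet

variable {σ : Type*} [Fintype σ] {u : σ → ℝ} {P Q : MvPolynomial σ ℝ}

/-- The polynomial `‖x - u‖²`. -/
noncomputable def sqDist (u : σ → ℝ) : MvPolynomial σ ℝ :=
  ∑ i, (X i - C (u i)) ^ 2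

theorem eval_sqDist (u x : σ → ℝ) : eval x (sqDist u) = ∑ i, (x i - u i) ^ 2 := by
  simp [sqDist]

theorem eval_sqDist_pos {u x : σ → ℝ} (hxu : x ≠ u) : 0 < eval x (sqDist u) := by
  obtain ⟨i, hi⟩ := Function.ne_iff.1 hxu
  rw [eval_sqDist]
  exact Finset.sum_pos' (fun i _ => sq_nonneg _)
    ⟨i, Finset.mem_univ i, by have := sub_ne_zero.2 hi; positivity⟩

theorem norm_sub_sq_le_eval_sqDist (u x : σ → ℝ) : ‖x - u‖ ^ 2 ≤ eval x (sqDist u) := by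
  have hnonneg : 0 ≤ ∑ i, (x i - u i) ^ 2 := Finset.sum_nonneg fun i _ => sq_nonneg _
  rw [eval_sqDist, ← Real.le_sqrt (norm_nonneg _) hnonneg,
    pi_norm_le_iff_of_nonneg (Real.sqrt_nonneg _)]
  refine fun i => Real.abs_le_sqrt ?_
  exact Finset.single_le_sum (f := fun i => (x i - u i) ^ 2) (fun i _ => sq_nonneg _)
    (Finset.mem_univ i)

theorem sqDist_mem_pointIdeal_sq (u : σ → ℝ) : sqDist u ∈ pointIdeal u ^ 2 :=
  sum_mem fun i _ => Ideal.pow_mem_pow (X_sub_C_mem_pointIdeal u i) 2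

/-- `P` vanishes to second order at `u` with a positive definite quadratic part. Positive
definiteness is recorded as a sum of squares representation modulo third order terms. -/
def HasPosDefJet (u : σ → ℝ) (P : MvPolynomial σ ℝ) : Prop :=
  ∃ ε > 0, ∃ ℓ : σ → MvPolynomial σ ℝ, (∀ k, ℓ k ∈ pointIdeal u) ∧
    P - (C ε * sqDist u + ∑ k, ℓ k ^ 2) ∈ pointIdeal u ^ 3

namespace HasPosDefJet

theorem mem_pointIdeal_sq (hP : HasPosDefJet u P) : P ∈ pointIdeal u ^ 2 := by
  obtain ⟨ε, -, ℓ, hℓ, hrem⟩ := hP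
  have hquad : C ε * sqDist u + ∑ k, ℓ k ^ 2 ∈ pointIdeal u ^ 2 :=
    add_mem (Ideal.mul_mem_left _ _ (sqDist_mem_pointIdeal_sq u))
      (sum_mem fun k _ => Ideal.pow_mem_pow (hℓ k) 2)
  simpa using add_mem (Ideal.pow_le_pow_right (Nat.le_succ 2) hrem) hquad

theorem congr (hP : HasPosDefJet u P) (hPQ : Q - P ∈ pointIdeal u ^ 3) : HasPosDefJet u Q := by
  obtain ⟨ε, hε, ℓ, hℓ, hrem⟩ := hP
  exact ⟨ε, hε, ℓ, hℓ, by simpa using add_mem hPQ hrem⟩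

theorem eventually_pos (hP : HasPosDefJet u P) : ∀ᶠ x in nhds u, x ≠ u → 0 < eval x P := by
  obtain ⟨ε, hε, ℓ, -, hrem⟩ := hP
  obtain ⟨c, -, hc⟩ := (eval_isBigO_of_mem_pointIdeal_pow hrem).exists_pos
  have hsmall : ∀ᶠ x in nhds u, c * ‖x - u‖ < ε := by
    have hcont : Continuous fun x : σ → ℝ => c * ‖x - u‖ := by fun_prop
    exact (hcont.tendsto u).eventually_lt_const (by simpa using hε)
  filter_upwards [hc.bound, hsmall] with x hbound hx hxu
  have hnorm : 0 < ‖x - u‖ := norm_pos_iff.2 (sub_ne_zero.2 hxu)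
  have hsq : 0 ≤ ∑ k, eval x (ℓ k) ^ 2 := Finset.sum_nonneg fun k _ => sq_nonneg _
  rw [Real.norm_eq_abs, norm_pow, norm_norm, map_sub, map_add, map_mul, eval_C, map_sum,
    abs_le] at hbound
  simp only [map_pow] at hbound
  calc (0 : ℝ) < (ε - c * ‖x - u‖) * ‖x - u‖ ^ 2 := mul_pos (sub_pos.2 hx) (by positivity)
    _ = ε * ‖x - u‖ ^ 2 - c * ‖x - u‖ ^ 3 := by ring
    _ ≤ ε * eval x (sqDist u) - c * ‖x - u‖ ^ 3 := by
      gcongr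
      exact norm_sub_sq_le_eval_sqDist u x
    _ ≤ eval x P := by linarith [hbound.1]

end HasPosDefJet

end PosDefJet

section SecondOrderFunctional

variable {σ : Type*} {u : σ → ℝ} {φ : MvPolynomial σ ℝ →ₗ[ℝ] ℝ}

theorem apply_eq_zero_of_mem_pointIdeal_cube
    (hmul : ∀ a, ∀ b ∈ pointIdeal u ^ 2, φ (a * b) = eval u a * φ b) {p : MvPolynomial σ ℝ}
    (hp : p ∈ pointIdeal u ^ 3) : φ p = 0 := by
  rw [pow_succ'] at hp
  refine Submodule.mul_induction_on hp (fun a ha b hb => ?_) fun a b ha hb => ?_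
  · rw [hmul a b hb, mem_pointIdeal.1 ha, zero_mul]
  · rw [map_add, ha, hb, add_zero]

theorem apply_sq_eq_zero_of_hasPosDefJet [Fintype σ]
    (hmul : ∀ a, ∀ b ∈ pointIdeal u ^ 2, φ (a * b) = eval u a * φ b)
    (hsq : ∀ q ∈ pointIdeal u, 0 ≤ φ (q ^ 2)) {P : MvPolynomial σ ℝ} (hP : HasPosDefJet u P)
    (hφP : φ P ≤ 0) (i : σ) : φ ((X i - C (u i)) ^ 2) = 0 := by
  obtain ⟨ε, hε, ℓ, hℓ, hrem⟩ := hP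
  have hcoord (i : σ) := hsq _ (X_sub_C_mem_pointIdeal u i)
  have hφrem := apply_eq_zero_of_mem_pointIdeal_cube hmul hrem
  rw [map_sub, map_add, C_mul', map_smul, smul_eq_mul, sqDist, map_sum, map_sum,
    sub_eq_zero] at hφrem
  have hlin : 0 ≤ ∑ k, φ (ℓ k ^ 2) := Finset.sum_nonneg fun k _ => hsq _ (hℓ k)
  have hsum : ∑ i, φ ((X i - C (u i)) ^ 2) = 0 :=
    le_antisymm (nonpos_of_mul_nonpos_right (by linarith) hε)
      (Finset.sum_nonneg fun i _ => hcoord i)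
  exact (Finset.sum_eq_zero_iff_of_nonneg fun i _ => hcoord i).1 hsum i (Finset.mem_univ i)

theorem apply_mul_eq_zero_of_apply_sq_eq_zero (hsq : ∀ q ∈ pointIdeal u, 0 ≤ φ (q ^ 2))
    {p q : MvPolynomial σ ℝ} (hp : p ∈ pointIdeal u) (hq : q ∈ pointIdeal u)
    (hφp : φ (p ^ 2) = 0) (hφq : φ (q ^ 2) = 0) : φ (p * q) = 0 := by
  have hadd := hsq _ (add_mem hp hq)
  have hsub := hsq _ (sub_mem hp hq)
  rw [show (p + q) ^ 2 = p ^ 2 + q ^ 2 + (2 : ℝ) • (p * q) by rw [ofNat_smul_eq_nsmul]; ring,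
    map_add, map_add, map_smul, hφp, hφq, smul_eq_mul] at hadd
  rw [show (p - q) ^ 2 = p ^ 2 + q ^ 2 - (2 : ℝ) • (p * q) by rw [ofNat_smul_eq_nsmul]; ring,
    map_sub, map_add, map_smul, hφp, hφq, smul_eq_mul] at hsub
  linarith

open scoped Pointwise in
/- A positive functional on second order jets that is not positive on a positive definite jet
kills the squares of the coordinates, hence by Cauchy-Schwarz all second order jets. -/
theorem apply_eq_zero_of_hasPosDefJet [Fintype σ]
    (hmul : ∀ a, ∀ b ∈ pointIdeal u ^ 2, φ (a * b) = eval u a * φ b)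
    (hsq : ∀ q ∈ pointIdeal u, 0 ≤ φ (q ^ 2)) {P : MvPolynomial σ ℝ} (hP : HasPosDefJet u P)
    (hφP : φ P ≤ 0) {p : MvPolynomial σ ℝ} (hp : p ∈ pointIdeal u ^ 2) : φ p = 0 := by
  have hcoord (i j : σ) : φ ((X i - C (u i)) * (X j - C (u j))) = 0 :=
    apply_mul_eq_zero_of_apply_sq_eq_zero hsq (X_sub_C_mem_pointIdeal u i)
      (X_sub_C_mem_pointIdeal u j) (apply_sq_eq_zero_of_hasPosDefJet hmul hsq hP hφP i)
      (apply_sq_eq_zero_of_hasPosDefJet hmul hsq hP hφP j)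
  have hspan : pointIdeal u ^ 2 = Ideal.span
      (Set.range (fun i => X i - C (u i)) * Set.range fun i => X i - C (u i)) := by
    rw [pow_two, pointIdeal_eq_span, Ideal.span_mul_span']
  rw [hspan] at hp
  induction hp using Submodule.closure_induction with
  | zero => exact map_zero φ
  | add p q _ _ hp hq => rw [map_add, hp, hq, add_zero]
  | smul_mem a p hp =>
    obtain ⟨_, ⟨i, rfl⟩, _, ⟨j, rfl⟩, rfl⟩ := hp
    rw [smul_eq_mul, hmul, hcoord, mul_zero]
    exact hspan ▸ Ideal.subset_span (Set.mul_mem_mul ⟨i, rfl⟩ ⟨j, rfl⟩)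

end SecondOrderFunctional

section LocalGlobal

variable {σ : Type*} {M : AddSubmonoid (MvPolynomial σ ℝ)}

/-- The set of points at which all elements of `M` are nonnegative. -/
def nonnegSet (M : AddSubmonoid (MvPolynomial σ ℝ)) : Set (σ → ℝ) :=
  {x | ∀ m ∈ M, 0 ≤ eval x m}

theorem isClosed_nonnegSet (M : AddSubmonoid (MvPolynomial σ ℝ)) : IsClosed (nonnegSet M) := by
  simp only [nonnegSet, Set.ofPred_forall]
  exact isClosed_biInter fun m _ => isClosed_le continuous_const (MvPolynomial.continuous_eval m)

theorem IsArchimedeanModule.isCompact_nonnegSet (hM : IsArchimedeanModule M) :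
    IsCompact (nonnegSet M) := by
  choose R _ hsub hadd using fun i => hM.exists_sub_add_mem_multipliers (X i)
  refine (isCompact_univ_pi fun i => isCompact_Icc (a := -R i) (b := R i)).of_isClosed_subset
    (isClosed_nonnegSet M) fun x hx i _ => ?_
  have hlower := hx _ (hM.mem_of_mem_multipliers (hadd i))
  have hupper := hx _ (hM.mem_of_mem_multipliers (hsub i))
  simp only [algebraMap_eq, map_add, map_sub, eval_C, eval_X] at hlower hupper
  exact ⟨by linarith, by linarith⟩

theorem eval_sum_sq_eq_zero_iff {s : Finset (MvPolynomial σ ℝ)} {x : σ → ℝ} :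
    eval x (∑ p ∈ s, p ^ 2) = 0 ↔ Ideal.span (s : Set (MvPolynomial σ ℝ)) ≤ pointIdeal x := by
  simp only [map_sum, map_pow]
  rw [Finset.sum_eq_zero_iff_of_nonneg fun p _ => sq_nonneg _, Ideal.span_le]
  simp only [sq_eq_zero_iff]
  exact Iff.rfl

theorem prod_pointIdeal_le_iff {t : Finset (σ → ℝ)} {x : σ → ℝ} :
    ∏ u ∈ t, pointIdeal u ≤ pointIdeal x ↔ x ∈ t := by
  refine ⟨fun h => ?_, fun hx => Ideal.prod_le_inf.trans (Finset.inf_le hx)⟩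
  obtain ⟨u, hu, hux⟩ := (Ideal.IsPrime.prod_le (isMaximal_pointIdeal x).isPrime).1 h
  exact eq_of_pointIdeal_le hux ▸ hu

/- Multiplication by the square of a polynomial that is `1` to second order at `x` and vanishes to
second order at the other points of `t` extends the functional to all second order jets at `x`. -/
theorem apply_eq_zero_of_prod_pointIdeal_sq_le [Fintype σ] {t : Finset (σ → ℝ)} {x : σ → ℝ}
    {J : Ideal (MvPolynomial σ ℝ)} (hJ : (∏ u ∈ t, pointIdeal u) ^ 2 ≤ J)
    {ψ : MvPolynomial σ ℝ →ₗ[ℝ] ℝ} (hsq : ∀ q, q ^ 2 ∈ J → 0 ≤ ψ (q ^ 2))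
    (hmul : ∀ a, ∀ b ∈ J, ψ (a * b) = eval x a * ψ b) {G w : MvPolynomial σ ℝ}
    (hGJ : G ∈ J) (hG : HasPosDefJet x G) (hψG : ψ G ≤ 0) (hwJ : w ∈ J)
    (hw : w ∈ pointIdeal x ^ 2) : ψ w = 0 := by
  obtain ⟨e, he, he'⟩ := exists_sub_one_mem_pointIdeal_sq t x
  have hex : eval x e = 1 := by
    simpa [mem_pointIdeal, sub_eq_zero] using Ideal.pow_le_self two_ne_zero he
  have hemem {p : MvPolynomial σ ℝ} (hp : p ∈ pointIdeal x ^ 2) : e ^ 2 * p ∈ J := by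
    refine hJ (mem_prod_pointIdeal_pow fun v hv => ?_)
    by_cases hvx : v = x
    · exact hvx ▸ Ideal.mul_mem_left _ _ hp
    · exact Ideal.mul_mem_right _ _ (Ideal.pow_mem_of_mem _ (he' v hv hvx) 2 two_pos)
  set φ : MvPolynomial σ ℝ →ₗ[ℝ] ℝ := ψ ∘ₗ LinearMap.mulLeft ℝ (e ^ 2)
  have hφψ {p : MvPolynomial σ ℝ} (hp : p ∈ J) : φ p = ψ p := by
    change ψ (e ^ 2 * p) = ψ p
    rw [hmul _ _ hp, map_pow, hex, one_pow, one_mul]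
  rw [← hφψ hwJ]
  refine apply_eq_zero_of_hasPosDefJet (fun a b hb => ?_) (fun q hq => ?_) hG
    ((hφψ hGJ).trans_le hψG) hw
  · change ψ (e ^ 2 * (a * b)) = eval x a * ψ (e ^ 2 * b)
    rw [mul_left_comm, hmul _ _ (hemem hb)]
  · have hmem := hemem (Ideal.pow_mem_pow hq 2)
    change 0 ≤ ψ (e ^ 2 * q ^ 2)
    rw [← mul_pow] at hmem ⊢
    exact hsq _ hmem

theorem IsArchimedeanModule.mem_of_pos_of_hasPosDefJet [Fintype σ] (hM : IsArchimedeanModule M)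
    {t : Finset (σ → ℝ)} {G : MvPolynomial σ ℝ} (hjet : ∀ u ∈ t, HasPosDefJet u G)
    (hpos : ∀ x ∈ nonnegSet M, x ∉ t → 0 < eval x G) : G ∈ M := by
  by_contra hG
  obtain ⟨s, hs⟩ : (∏ u ∈ t, pointIdeal u).FG := IsNoetherian.noetherian _
  set w : MvPolynomial σ ℝ := ∑ p ∈ s, p ^ 2 with hw
  have hw_zero {x : σ → ℝ} : eval x w = 0 ↔ x ∈ t := by
    rw [hw, eval_sum_sq_eq_zero_iff, ← prod_pointIdeal_le_iff, ← hs]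
  have hwM : w ∈ multipliers M := sum_mem fun p _ => hM.sq_mem_multipliers p
  have hJ : (∏ u ∈ t, pointIdeal u) ^ 2 ≤ hM.boundedIdeal w := by
    rw [← hs]
    exact hM.span_sq_le_boundedIdeal s
  have hsub {p : MvPolynomial σ ℝ} (hp : p ∈ s) : p ∈ ∏ u ∈ t, pointIdeal u :=
    hs ▸ Ideal.subset_span hp
  have hwJ : w ∈ hM.boundedIdeal w := hJ (sum_mem fun p hp => Ideal.pow_mem_pow (hsub hp) 2)
  have hGJ : G ∈ hM.boundedIdeal w :=
    hJ (mem_prod_pointIdeal_pow fun u hu => (hjet u hu).mem_pointIdeal_sq)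
  obtain ⟨ψ, χ, hψ, hψw, hψG, hχ, hmul⟩ := hM.exists_pureState hwM hGJ hG
  obtain ⟨x, rfl⟩ : ∃ x : σ → ℝ, χ = aeval x := ⟨_, aeval_unique χ⟩
  simp only [aeval_eq_eval] at hχ hmul
  by_cases hx : x ∈ t
  · have hwx : w ∈ pointIdeal x ^ 2 :=
      sum_mem fun p hp => Ideal.pow_mem_pow (prod_pointIdeal_le_iff.2 hx (hsub hp)) 2
    refine one_ne_zero (hψw.symm.trans ?_)
    exact apply_eq_zero_of_prod_pointIdeal_sq_le hJ (fun q => hψ _ (hM.sq_mem q)) hmul hGJ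
      (hjet x hx) hψG hwJ hwx
  · have hwx : 0 < eval x w :=
      (hχ w (hM.mem_of_mem_multipliers hwM)).lt_of_ne' (mt hw_zero.1 hx)
    have hcomm : eval x w * ψ G = eval x G := by
      rw [← hmul w G hGJ, mul_comm w G, hmul G w hwJ, hψw, mul_one]
    exact (hpos x hχ hx).not_ge (hcomm ▸ mul_nonpos_of_nonneg_of_nonpos hwx.le hψG)

theorem exists_forall_pos_of_isCompact {X : Type*} [TopologicalSpace X] {K : Set X}
    (hK : IsCompact K) {g : ℕ → X → ℝ} (hcont : ∀ k, Continuous (g k))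
    (hmono : ∀ x ∈ K, Monotone fun k => g k x) (hpos : ∀ x ∈ K, ∃ k, 0 < g k x) :
    ∃ k, ∀ x ∈ K, 0 < g k x := by
  obtain ⟨T, hT⟩ := hK.elim_finite_subcover (fun k => g k ⁻¹' Set.Ioi 0)
    (fun k => isOpen_Ioi.preimage (hcont k)) fun x hx => Set.mem_iUnion.2 (hpos x hx)
  refine ⟨T.sup id, fun x hx => ?_⟩
  obtain ⟨k, hk, hxk⟩ := Set.mem_iUnion₂.1 (hT hx)
  exact lt_of_lt_of_le hxk (hmono x hx (Finset.le_sup (f := id) hk))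

theorem exists_forall_sub_pow_mul_pos {X : Type*} [TopologicalSpace X] {K : Set X}
    (hK : IsCompact K) {t : Set X} {F S c : X → ℝ} (hF : Continuous F) (hS : Continuous S)
    (hc : Continuous c) (hS0 : ∀ x ∈ K, 0 ≤ S x) (hc0 : ∀ x ∈ K, 0 ≤ c x)
    (hc1 : ∀ x ∈ K, c x ≤ 1) (hclt : ∀ x ∈ K, x ∉ t → c x < 1)
    (hFpos : ∀ x ∈ K, x ∉ t → 0 < F x)
    (hlocal : ∀ u ∈ t, ∀ᶠ x in nhds u, x ≠ u → 0 < F x - S x) :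
    ∃ k : ℕ, ∀ x ∈ K, x ∉ t → 0 < F x - c x ^ k * S x := by
  have hO (u : t) : ∃ O : Set X, IsOpen O ∧ u.1 ∈ O ∧ ∀ x ∈ O, x ≠ u → 0 < F x - S x := by
    obtain ⟨O, hO, hOopen, huO⟩ := mem_nhds_iff.1 (hlocal u u.2)
    exact ⟨O, hOopen, huO, hO⟩
  choose O hOopen hmemO hposO using hO
  have hmono : ∀ x ∈ K, Monotone fun k : ℕ => F x - c x ^ k * S x := fun x hx k l hkl => by
    have := mul_le_mul_of_nonneg_right (pow_le_pow_of_le_one (hc0 x hx) (hc1 x hx) hkl) (hS0 x hx)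
    exact sub_le_sub_left this _
  have htendsto (x : X) (hx : x ∈ K) (hxt : x ∉ t) : ∃ k : ℕ, 0 < F x - c x ^ k * S x := by
    have hlim := (tendsto_pow_atTop_nhds_zero_of_lt_one (hc0 x hx) (hclt x hx hxt)).mul_const (S x)
    rw [zero_mul] at hlim
    exact (hlim.eventually_lt_const (hFpos x hx hxt)).exists.imp fun k => sub_pos.2
  obtain ⟨k, hk⟩ := exists_forall_pos_of_isCompact (hK.diff (isOpen_iUnion hOopen))
    (g := fun k x => F x - c x ^ k * S x) (fun k => by fun_prop) (fun x hx => hmono x hx.1)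
    fun x hx => htendsto x hx.1 fun hxt => hx.2 (Set.mem_iUnion.2 ⟨⟨x, hxt⟩, hmemO _⟩)
  refine ⟨k, fun x hx hxt => ?_⟩
  by_cases hxO : x ∈ ⋃ u, O u
  · obtain ⟨u, hxu⟩ := Set.mem_iUnion.1 hxO
    have hnear := hposO u x hxu fun h => hxt (h ▸ u.2)
    exact lt_of_lt_of_le (by simpa using hnear) (hmono x hx k.zero_le)
  · exact hk x ⟨hx, hxO⟩

theorem exists_peak_polynomial [Finite σ] {K : Set (σ → ℝ)} (hK : IsCompact K)
    (t : Finset (σ → ℝ)) : ∃ b : MvPolynomial σ ℝ, (∀ u ∈ t, b - 1 ∈ pointIdeal u ^ 2) ∧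
      ∀ x ∈ K, |eval x b| ≤ 1 ∧ (x ∉ t → |eval x b| < 1) := by
  cases nonempty_fintype σ
  set P : MvPolynomial σ ℝ := ∏ u ∈ t, sqDist u with hP
  obtain ⟨R, hR⟩ := hK.bddAbove_image (MvPolynomial.continuous_eval P).continuousOn
  have hRP {x : σ → ℝ} (hx : x ∈ K) : eval x P ≤ max R 1 :=
    (hR (Set.mem_image_of_mem _ hx)).trans (le_max_left R 1)
  have hR0 : 0 < max R 1 := lt_max_of_lt_right one_pos
  refine ⟨1 - C (max R 1)⁻¹ * P, fun u hu => ?_, fun x hx => ?_⟩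
  · rw [sub_sub_cancel_left, neg_mem_iff]
    exact Ideal.mul_mem_left _ _ (Ideal.mem_of_dvd _ (Finset.dvd_prod_of_mem _ hu)
      (sqDist_mem_pointIdeal_sq u))
  have hle : (max R 1)⁻¹ * eval x P ≤ 1 := by
    rw [inv_mul_le_iff₀ hR0, mul_one]
    exact hRP hx
  rw [map_sub, map_one, map_mul, eval_C, abs_of_nonneg (sub_nonneg.2 hle), sub_le_self_iff,
    sub_lt_self_iff, hP, map_prod]
  refine ⟨mul_nonneg (by positivity) (Finset.prod_nonneg fun u _ => ?_), fun hxt => ?_⟩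
  · rw [eval_sqDist]
    positivity
  · exact mul_pos (by positivity)
      (Finset.prod_pos fun u hu => eval_sqDist_pos fun h => hxt (h ▸ hu))

theorem IsQuadraticModule.exists_hasPosDefJet_sub_mul [Fintype σ] (hM : IsQuadraticModule M)
    {t : Finset (σ → ℝ)} {F : MvPolynomial σ ℝ} (hF : ∀ u ∈ t, eval u F = 0)
    (hloc : ∀ u ∈ t, ∃ s ∈ M, HasPosDefJet u (F - s)) :
    ∃ S ∈ M, ∀ q : MvPolynomial σ ℝ, ∀ u ∈ t, q - 1 ∈ pointIdeal u ^ 2 →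
      HasPosDefJet u (F - q * S) := by
  classical
  choose! s hsM hs using hloc
  choose e he he' using exists_sub_one_mem_pointIdeal_sq t
  have hsu {u : σ → ℝ} (hu : u ∈ t) : s u ∈ pointIdeal u := by
    have := Ideal.pow_le_self two_ne_zero (hs u hu).mem_pointIdeal_sq
    simpa [mem_pointIdeal, hF u hu] using this
  refine ⟨∑ u ∈ t, e u ^ 2 * s u, sum_mem fun u hu => hM.sq_mem_multipliers _ _ (hsM u hu),
    fun q u hu hq => (hs u hu).congr ?_⟩
  have hsplit : F - q * ∑ u ∈ t, e u ^ 2 * s u - (F - s u) =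
      -((q * e u ^ 2 - 1) * s u) - q * ∑ v ∈ t.erase u, e v ^ 2 * s v := by
    rw [← Finset.add_sum_erase t _ hu]
    ring
  rw [hsplit]
  refine sub_mem (neg_mem ?_) (Ideal.mul_mem_left _ _ (sum_mem fun v hv => ?_))
  · rw [pow_succ]
    exact Ideal.mul_mem_mul (mul_sub_one_mem hq (pow_sub_one_mem (he u) 2)) (hsu hu)
  · have hev := Ideal.pow_mem_pow (he' v u hu (Finset.ne_of_mem_erase hv).symm) 2
    rw [← pow_mul] at hev
    exact Ideal.mul_mem_right _ _ (Ideal.pow_le_pow_right (by norm_num) hev)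

theorem finite_zeros_of_hasPosDefJet [Fintype σ] (hK : IsCompact (nonnegSet M))
    {F : MvPolynomial σ ℝ}
    (hloc : ∀ u ∈ nonnegSet M, eval u F = 0 → ∃ s ∈ M, HasPosDefJet u (F - s)) :
    (nonnegSet M ∩ {u | eval u F = 0}).Finite := by
  set Z := nonnegSet M ∩ {u | eval u F = 0}
  have hZ : IsCompact Z :=
    hK.inter_right (isClosed_eq (MvPolynomial.continuous_eval F) continuous_const)
  have hiso : ∀ u ∈ Z, {x | x ∈ Z → x = u} ∈ nhds u := by
    intro u hu
    obtain ⟨s, hsM, hs⟩ := hloc u hu.1 hu.2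
    filter_upwards [hs.eventually_pos] with x hx hxZ
    by_contra hne
    have hpos := hx hne
    rw [map_sub, hxZ.2] at hpos
    linarith [hxZ.1 s hsM]
  obtain ⟨t, -, ht⟩ := hZ.elim_nhds_subcover _ hiso
  refine t.finite_toSet.subset fun x hx => ?_
  obtain ⟨u, hu, hxu⟩ := Set.mem_iUnion₂.1 (ht hx)
  exact hxu hx ▸ hu

theorem IsArchimedeanModule.mem_of_nonneg_of_hasPosDefJet [Fintype σ]
    (hM : IsArchimedeanModule M) {F : MvPolynomial σ ℝ} (hF : ∀ x ∈ nonnegSet M, 0 ≤ eval x F)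
    (hloc : ∀ u ∈ nonnegSet M, eval u F = 0 → ∃ s ∈ M, HasPosDefJet u (F - s)) : F ∈ M := by
  have hK := hM.isCompact_nonnegSet
  obtain ⟨t, ht⟩ := (finite_zeros_of_hasPosDefJet hK hloc).exists_finset_coe
  have hmem {x : σ → ℝ} : x ∈ t ↔ x ∈ nonnegSet M ∧ eval x F = 0 := by
    rw [← Finset.mem_coe, ht]
    exact Iff.rfl
  obtain ⟨S, hSM, hS⟩ := hM.exists_hasPosDefJet_sub_mul (fun u hu => (hmem.1 hu).2)
    fun u hu => hloc u (hmem.1 hu).1 (hmem.1 hu).2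
  obtain ⟨b, hb, hbK⟩ := exists_peak_polynomial hK t
  obtain ⟨k, hk⟩ := exists_forall_sub_pow_mul_pos hK (t := t) (F := fun x => eval x F)
    (S := fun x => eval x S) (c := fun x => eval x b ^ 2) (MvPolynomial.continuous_eval F)
    (MvPolynomial.continuous_eval S) ((MvPolynomial.continuous_eval b).pow 2)
    (fun x hx => hx S hSM) (fun x _ => sq_nonneg _)
    (fun x hx => (sq_le_one_iff_abs_le_one _).2 (hbK x hx).1)
    (fun x hx hxt => (sq_lt_one_iff_abs_lt_one _).2 ((hbK x hx).2 hxt))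
    (fun x hx hxt => (hF x hx).lt_of_ne' fun h => hxt (hmem.2 ⟨hx, h⟩))
    fun u hu => by simpa using (hS 1 u hu (by simp)).eventually_pos
  have hG : F - (b ^ 2) ^ k * S ∈ M := by
    refine hM.mem_of_pos_of_hasPosDefJet (t := t) (fun u hu => hS _ u hu ?_) fun x hx hxt => ?_
    · exact pow_sub_one_mem (pow_sub_one_mem (hb u hu) 2) k
    · simpa using hk x hx hxt
  simpa using add_mem hG (pow_mem (hM.sq_mem_multipliers b) k S hSM)

end LocalGlobal

section DirectionalDerivative

variable {σ : Type*} [Fintype σ] {u : σ → ℝ}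

/-- The derivation `∑ i, v i ∂/∂xᵢ`, i.e. differentiation in the direction `v`. -/
noncomputable def dirDeriv (v : σ → ℝ) :
    Derivation ℝ (MvPolynomial σ ℝ) (MvPolynomial σ ℝ) :=
  ∑ i, v i • pderiv i

theorem dirDeriv_apply (v : σ → ℝ) (p : MvPolynomial σ ℝ) :
    dirDeriv v p = ∑ i, v i • pderiv i p := by
  rw [dirDeriv, ← Derivation.coeFnAddMonoidHom_apply, map_sum, Finset.sum_apply]
  rfl

theorem eval_dirDeriv (u v : σ → ℝ) (p : MvPolynomial σ ℝ) :
    eval u (dirDeriv v p) = ∑ i, v i * eval u (pderiv i p) := by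
  simp [dirDeriv_apply, smul_eval]

theorem eval_dirDeriv_dirDeriv (u v : σ → ℝ) (p : MvPolynomial σ ℝ) :
    eval u (dirDeriv v (dirDeriv v p))
      = ∑ i, ∑ j, v i * eval u (pderiv i (pderiv j p)) * v j := by
  rw [eval_dirDeriv]
  refine Finset.sum_congr rfl fun i _ => ?_
  simp only [dirDeriv_apply, map_sum, Derivation.map_smul, smul_eval, Finset.mul_sum]
  exact Finset.sum_congr rfl fun j _ => by ring

theorem eval_dirDeriv_X_sub_C (u v : σ → ℝ) (i : σ) :
    eval u (dirDeriv v (X i - C (u i))) = v i := by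
  classical simp [eval_dirDeriv, pderiv_X, Pi.single_apply]

theorem eval_dirDeriv_dirDeriv_mul (v : σ → ℝ) {p q : MvPolynomial σ ℝ} (hp : p ∈ pointIdeal u)
    (hq : q ∈ pointIdeal u) :
    eval u (dirDeriv v (dirDeriv v (p * q)))
      = 2 * (eval u (dirDeriv v p) * eval u (dirDeriv v q)) := by
  simp only [Derivation.leibniz, map_add, smul_eq_mul, map_mul, mem_pointIdeal.1 hp,
    mem_pointIdeal.1 hq]
  ring

theorem eval_dirDeriv_eq_zero (v : σ → ℝ) {p : MvPolynomial σ ℝ} (hp : p ∈ pointIdeal u ^ 2) :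
    eval u (dirDeriv v p) = 0 := by
  rw [pow_two] at hp
  refine Submodule.mul_induction_on hp (fun a ha b hb => ?_) fun a b ha hb => ?_
  · simp [mem_pointIdeal.1 ha, mem_pointIdeal.1 hb]
  · rw [map_add, map_add, ha, hb, add_zero]

theorem eval_dirDeriv_dirDeriv_eq_zero (v : σ → ℝ) {p : MvPolynomial σ ℝ}
    (hp : p ∈ pointIdeal u ^ 3) : eval u (dirDeriv v (dirDeriv v p)) = 0 := by
  rw [pow_succ'] at hp
  refine Submodule.mul_induction_on hp (fun a ha b hb => ?_) fun a b ha hb => ?_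
  · rw [eval_dirDeriv_dirDeriv_mul v ha (Ideal.pow_le_self two_ne_zero hb),
      eval_dirDeriv_eq_zero v hb, mul_zero, mul_zero]
  · rw [map_add, map_add, map_add, ha, hb, add_zero]

theorem dirDeriv_smul (t : ℝ) (v : σ → ℝ) (p : MvPolynomial σ ℝ) :
    dirDeriv (t • v) p = t • dirDeriv v p := by
  simp [dirDeriv_apply, Finset.smul_sum, mul_smul]

theorem eval_dirDeriv_dirDeriv_smul (t : ℝ) (u v : σ → ℝ) (p : MvPolynomial σ ℝ) :
    eval u (dirDeriv (t • v) (dirDeriv (t • v) p))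
      = t ^ 2 * eval u (dirDeriv v (dirDeriv v p)) := by
  simp only [dirDeriv_smul, Derivation.map_smul, smul_eval]
  ring

end DirectionalDerivative

section LeadingForm

variable {σ : Type*} [Fintype σ] {u : σ → ℝ}

theorem exists_sub_linearForm_mem_pointIdeal_sq {p : MvPolynomial σ ℝ} (hp : p ∈ pointIdeal u) :
    ∃ c : σ → ℝ, p - ∑ i, C (c i) * (X i - C (u i)) ∈ pointIdeal u ^ 2 := by
  rw [pointIdeal_eq_span, Ideal.mem_span_range_iff_exists_fun] at hp
  obtain ⟨a, rfl⟩ := hp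
  refine ⟨fun i => eval u (a i), ?_⟩
  rw [← Finset.sum_sub_distrib, pow_two]
  refine sum_mem fun i _ => ?_
  rw [← sub_mul]
  exact Ideal.mul_mem_mul (by simp [mem_pointIdeal]) (X_sub_C_mem_pointIdeal u i)

theorem mem_pointIdeal_sq_of_eval_dirDeriv_eq_zero {p : MvPolynomial σ ℝ}
    (hp : p ∈ pointIdeal u) (hderiv : ∀ v, eval u (dirDeriv v p) = 0) : p ∈ pointIdeal u ^ 2 := by
  classical
  obtain ⟨c, hc⟩ := exists_sub_linearForm_mem_pointIdeal_sq hp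
  have hzero (j : σ) : c j = 0 := by
    have hj := eval_dirDeriv_eq_zero (Pi.single j 1) hc
    rw [map_sub, map_sub, hderiv] at hj
    simp only [C_mul', map_sum, Derivation.map_smul, smul_eval, eval_dirDeriv_X_sub_C] at hj
    simpa [Pi.single_apply] using hj
  simpa [hzero] using hc

/-- The quadratic form with matrix `c`, centred at `u`. -/
noncomputable def centredQuadratic (u : σ → ℝ) (c : Matrix σ σ ℝ) : MvPolynomial σ ℝ :=
  ∑ i, ∑ j, C (c i j) * ((X i - C (u i)) * (X j - C (u j)))

theorem exists_sub_centredQuadratic_mem_pointIdeal_cube {p : MvPolynomial σ ℝ}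
    (hp : p ∈ pointIdeal u ^ 2) :
    ∃ c : Matrix σ σ ℝ, p - centredQuadratic u c ∈ pointIdeal u ^ 3 := by
  rw [pow_two] at hp
  refine Submodule.mul_induction_on hp (fun a ha b hb => ?_) fun a b ha hb => ?_
  · obtain ⟨s, hs⟩ := exists_sub_linearForm_mem_pointIdeal_sq ha
    obtain ⟨t, ht⟩ := exists_sub_linearForm_mem_pointIdeal_sq hb
    have hlin : ∑ i, C (s i) * (X i - C (u i)) ∈ pointIdeal u :=
      sum_mem fun i _ => Ideal.mul_mem_left _ _ (X_sub_C_mem_pointIdeal u i)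
    have hquad : centredQuadratic u (Matrix.vecMulVec s t)
        = (∑ i, C (s i) * (X i - C (u i))) * ∑ j, C (t j) * (X j - C (u j)) := by
      rw [Finset.sum_mul_sum, centredQuadratic]
      refine Finset.sum_congr rfl fun i _ => Finset.sum_congr rfl fun j _ => ?_
      rw [Matrix.vecMulVec_apply, C_mul]
      ring
    refine ⟨Matrix.vecMulVec s t, ?_⟩
    rw [hquad, ← sub_add_sub_cancel _ ((∑ i, C (s i) * (X i - C (u i))) * b), ← sub_mul,
      ← mul_sub]
    exact add_mem (pow_succ (pointIdeal u) 2 ▸ Ideal.mul_mem_mul hs hb)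
      (pow_succ' (pointIdeal u) 2 ▸ Ideal.mul_mem_mul hlin ht)
  · obtain ⟨s, hs⟩ := ha
    obtain ⟨t, ht⟩ := hb
    refine ⟨s + t, ?_⟩
    convert add_mem hs ht using 1
    simp only [centredQuadratic, Matrix.add_apply, C_add, add_mul, Finset.sum_add_distrib]
    ring

theorem centredQuadratic_symmetrize (u : σ → ℝ) (c : Matrix σ σ ℝ) :
    centredQuadratic u ((1 / 2 : ℝ) • (c + c.transpose)) = centredQuadratic u c := by
  have htrans : centredQuadratic u c.transpose = centredQuadratic u c := by
    rw [centredQuadratic, Finset.sum_comm, centredQuadratic]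
    refine Finset.sum_congr rfl fun i _ => Finset.sum_congr rfl fun j _ => ?_
    rw [Matrix.transpose_apply, mul_comm (X j - C (u j))]
  have hadd : centredQuadratic u ((1 / 2 : ℝ) • (c + c.transpose))
      = C (1 / 2) * (centredQuadratic u c + centredQuadratic u c.transpose) := by
    simp only [centredQuadratic, Matrix.smul_apply, Matrix.add_apply, smul_eq_mul, C_mul, C_add,
      mul_add, add_mul, Finset.sum_add_distrib, Finset.mul_sum, mul_assoc]
  rw [hadd, htrans, ← two_mul, ← mul_assoc, show (2 : MvPolynomial σ ℝ) = C 2 from rfl, ← C_mul]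
  norm_num

theorem eval_dirDeriv_dirDeriv_centredQuadratic (u v : σ → ℝ) (c : Matrix σ σ ℝ) :
    eval u (dirDeriv v (dirDeriv v (centredQuadratic u c))) = 2 * (v ⬝ᵥ c.mulVec v) := by
  simp only [centredQuadratic, map_sum, C_mul', Derivation.map_smul, smul_eval, dotProduct,
    Matrix.mulVec, Finset.mul_sum]
  refine Finset.sum_congr rfl fun i _ => Finset.sum_congr rfl fun j _ => ?_
  rw [eval_dirDeriv_dirDeriv_mul v (X_sub_C_mem_pointIdeal u i) (X_sub_C_mem_pointIdeal u j),
    eval_dirDeriv_X_sub_C, eval_dirDeriv_X_sub_C]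
  ring

end LeadingForm

section SecondOrderCriterion

variable {σ : Type*} [Fintype σ] {u : σ → ℝ}

open scoped MatrixOrder in
theorem exists_eq_smul_one_add_transpose_mul_self [DecidableEq σ] {c : Matrix σ σ ℝ}
    (hc : c.PosDef) :
    ∃ ε > (0 : ℝ), ∃ B : Matrix σ σ ℝ, c = ε • (1 : Matrix σ σ ℝ) + B.transpose * B := by
  cases isEmpty_or_nonempty σ
  · exact ⟨1, one_pos, 0, Subsingleton.elim _ _⟩
  have hpos := hc.isStrictlyPositive
  obtain ⟨ε, hε, hle⟩ := (CFC.exists_pos_algebraMap_le_iff hpos.isSelfAdjoint).2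
    fun x hx => hpos.spectrum_pos hx
  obtain ⟨B, hB⟩ := CStarAlgebra.nonneg_iff_eq_star_mul_self.1 (sub_nonneg.2 hle)
  refine ⟨ε, hε, B, ?_⟩
  rw [← Algebra.algebraMap_eq_smul_one, ← sub_eq_iff_eq_add', hB, Matrix.star_eq_conjTranspose,
    Matrix.conjTranspose_eq_transpose_of_trivial]

theorem centredQuadratic_smul_one_add_transpose_mul_self [DecidableEq σ] (u : σ → ℝ) (ε : ℝ)
    (B : Matrix σ σ ℝ) :
    centredQuadratic u (ε • (1 : Matrix σ σ ℝ) + B.transpose * B)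
      = C ε * sqDist u + ∑ k, (∑ i, C (B k i) * (X i - C (u i))) ^ 2 := by
  have hgram : centredQuadratic u (B.transpose * B)
      = ∑ k, (∑ i, C (B k i) * (X i - C (u i))) ^ 2 := by
    simp only [centredQuadratic, Matrix.mul_apply, Matrix.transpose_apply, map_sum, C_mul,
      Finset.sum_mul, pow_two, Finset.mul_sum]
    rw [Finset.sum_comm_cycle]
    refine Finset.sum_congr rfl fun k _ => Finset.sum_congr rfl fun i _ =>
      Finset.sum_congr rfl fun j _ => by ring
  rw [← hgram]
  simp only [centredQuadratic, Matrix.add_apply, Matrix.smul_apply, smul_eq_mul, C_add, add_mul,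
    Finset.sum_add_distrib, sqDist, Matrix.one_apply, mul_ite, mul_one, mul_zero, Finset.mul_sum,
    apply_ite C, C_0, ite_mul, zero_mul, Finset.sum_ite_eq, Finset.mem_univ, if_true, pow_two]

theorem hasPosDefJet_of_eval_dirDeriv_dirDeriv_pos {P : MvPolynomial σ ℝ}
    (hP : P ∈ pointIdeal u ^ 2)
    (hpos : ∀ v ≠ 0, 0 < eval u (dirDeriv v (dirDeriv v P))) : HasPosDefJet u P := by
  classical
  obtain ⟨c, hc⟩ := exists_sub_centredQuadratic_mem_pointIdeal_cube hP
  rw [← centredQuadratic_symmetrize] at hc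
  have hposDef : ((1 / 2 : ℝ) • (c + c.transpose)).PosDef := by
    refine .of_dotProduct_mulVec_pos ?_ fun v hv => ?_
    · rw [Matrix.IsHermitian, Matrix.conjTranspose_eq_transpose_of_trivial, Matrix.transpose_smul,
        Matrix.transpose_add, Matrix.transpose_transpose, add_comm]
    · have hv' := eval_dirDeriv_dirDeriv_eq_zero v hc
      rw [map_sub, map_sub, map_sub, eval_dirDeriv_dirDeriv_centredQuadratic] at hv'
      rw [star_trivial]
      linarith [hpos v hv]
  obtain ⟨ε, hε, B, hB⟩ := exists_eq_smul_one_add_transpose_mul_self hposDef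
  rw [hB, centredQuadratic_smul_one_add_transpose_mul_self] at hc
  exact ⟨ε, hε, _, fun k => sum_mem fun i _ =>
    Ideal.mul_mem_left _ _ (X_sub_C_mem_pointIdeal u i), hc⟩

end SecondOrderCriterion

section AugmentedLagrangian

variable {σ ι : Type*} [Fintype σ] {u : σ → ℝ} {S : Finset ι} {g : ι → MvPolynomial σ ℝ}

theorem exists_eval_dirDeriv_dirDeriv_add_pos {L : MvPolynomial σ ℝ}
    (hpos : ∀ v ≠ 0, (∀ o ∈ S, eval u (dirDeriv v (g o)) = 0) →
      0 < eval u (dirDeriv v (dirDeriv v L))) :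
    ∃ k : ℕ, ∀ v ∈ Metric.sphere (0 : σ → ℝ) 1,
      0 < eval u (dirDeriv v (dirDeriv v L)) + k * ∑ o ∈ S, eval u (dirDeriv v (g o)) ^ 2 := by
  have hnonneg (v : σ → ℝ) : 0 ≤ ∑ o ∈ S, eval u (dirDeriv v (g o)) ^ 2 :=
    Finset.sum_nonneg fun o _ => sq_nonneg _
  refine exists_forall_pos_of_isCompact (isCompact_sphere 0 1) (fun k => ?_)
    (fun v _ => ?_) fun v hv => ?_
  · simp_rw [eval_dirDeriv_dirDeriv, eval_dirDeriv]
    fun_prop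
  · exact Monotone.const_add (Nat.mono_cast.mul_const (hnonneg v)) _
  · by_cases hker : ∀ o ∈ S, eval u (dirDeriv v (g o)) = 0
    · exact ⟨0, by simpa using hpos v (ne_zero_of_mem_unit_sphere ⟨v, hv⟩) hker⟩
    · push Not at hker
      obtain ⟨o, ho, hne⟩ := hker
      have hsum : 0 < ∑ o ∈ S, eval u (dirDeriv v (g o)) ^ 2 :=
        Finset.sum_pos' (fun o _ => sq_nonneg _) ⟨o, ho, by positivity⟩
      obtain ⟨k, hk⟩ := exists_nat_gt
        (-eval u (dirDeriv v (dirDeriv v L)) / ∑ o ∈ S, eval u (dirDeriv v (g o)) ^ 2)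
      rw [div_lt_iff₀ hsum] at hk
      exact ⟨k, by linarith⟩

theorem exists_hasPosDefJet_add_sum_sq {L : MvPolynomial σ ℝ} (hL : L ∈ pointIdeal u ^ 2)
    (hg : ∀ o ∈ S, g o ∈ pointIdeal u)
    (hpos : ∀ v ≠ 0, (∀ o ∈ S, eval u (dirDeriv v (g o)) = 0) →
      0 < eval u (dirDeriv v (dirDeriv v L))) :
    ∃ r ≥ (0 : ℝ), HasPosDefJet u (L + C r * ∑ o ∈ S, g o ^ 2) := by
  obtain ⟨k, hk⟩ := exists_eval_dirDeriv_dirDeriv_add_pos hpos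
  refine ⟨k, k.cast_nonneg, hasPosDefJet_of_eval_dirDeriv_dirDeriv_pos ?_ fun v hv => ?_⟩
  · exact add_mem hL (Ideal.mul_mem_left _ _ (sum_mem fun o ho => Ideal.pow_mem_pow (hg o ho) 2))
  · have hvnorm : 0 < ‖v‖ := norm_pos_iff.2 hv
    set w := ‖v‖⁻¹ • v with hw
    have hwnorm : w ∈ Metric.sphere (0 : σ → ℝ) 1 := by simp [hw, norm_smul, hvnorm.ne']
    have hvw : v = ‖v‖ • w := by rw [hw, smul_smul, mul_inv_cancel₀ hvnorm.ne', one_smul]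
    have hsq : eval u (dirDeriv w (dirDeriv w (∑ o ∈ S, g o ^ 2)))
        = 2 * ∑ o ∈ S, eval u (dirDeriv w (g o)) ^ 2 := by
      rw [map_sum, map_sum, map_sum, Finset.mul_sum]
      refine Finset.sum_congr rfl fun o ho => ?_
      rw [pow_two, eval_dirDeriv_dirDeriv_mul w (hg o ho) (hg o ho), pow_two]
    have hnonneg : 0 ≤ k * ∑ o ∈ S, eval u (dirDeriv w (g o)) ^ 2 := by positivity
    rw [hvw, eval_dirDeriv_dirDeriv_smul, C_mul', map_add, Derivation.map_smul, map_add,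
      Derivation.map_smul, map_add, smul_eval, hsq]
    exact mul_pos (by positivity) (by linarith [hk w hwnorm])

end AugmentedLagrangian

section Multipliers

variable {σ : Type*} {u : σ → ℝ} {M : AddSubmonoid (MvPolynomial σ ℝ)}

/-- Modulo third order terms at `u`, the module `M` contains `lam * g - r * g ^ 2` for every
`r ≥ 0`: the multiple `lam * g` can be subtracted from an objective together with an arbitrarily
strong penalty on `g`. -/
def HasPenalizedMultiplier (M : AddSubmonoid (MvPolynomial σ ℝ)) (u : σ → ℝ)
    (g : MvPolynomial σ ℝ) (lam : ℝ) : Prop :=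
  ∀ r ≥ 0, ∃ s ∈ M, s - (C lam * g - C r * g ^ 2) ∈ pointIdeal u ^ 3

theorem mul_mul_sub_mul_mem_pointIdeal_cube {g W : MvPolynomial σ ℝ} (hg : g ∈ pointIdeal u)
    (hW : W - 1 ∈ pointIdeal u ^ 2) (a : MvPolynomial σ ℝ) :
    g * W * a - g * a ∈ pointIdeal u ^ 3 := by
  rw [show g * W * a - g * a = a * (g * (W - 1)) by ring]
  exact Ideal.mul_mem_left _ a (pow_succ' (pointIdeal u) 2 ▸ Ideal.mul_mem_mul hg hW)

theorem hasPenalizedMultiplier_of_forall_mul_mem {g W : MvPolynomial σ ℝ} (hg : g ∈ pointIdeal u)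
    (hW : W - 1 ∈ pointIdeal u ^ 2) (hmem : ∀ q, g * W * q ∈ M) (lam : ℝ) :
    HasPenalizedMultiplier M u g lam := by
  refine fun r _ => ⟨_, hmem (C lam - C r * g), ?_⟩
  convert mul_mul_sub_mul_mem_pointIdeal_cube hg hW (C lam - C r * g) using 2
  ring

/- Completing the square: `lam - r g ≡ (√lam - r g / (2 √lam))²` modulo second order terms. -/
theorem IsQuadraticModule.hasPenalizedMultiplier_of_pos (hM : IsQuadraticModule M)
    {g W : MvPolynomial σ ℝ} (hg : g ∈ pointIdeal u) (hW : W - 1 ∈ pointIdeal u ^ 2)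
    (hmem : g * W ∈ M) {lam : ℝ} (hlam : 0 < lam) : HasPenalizedMultiplier M u g lam := by
  intro r _
  set a : MvPolynomial σ ℝ := C √lam - C (r / (2 * √lam)) * g with ha
  have hconst : (C √lam : MvPolynomial σ ℝ) ^ 2 = C lam := by rw [← C_pow, Real.sq_sqrt hlam.le]
  have hlinear : (2 : MvPolynomial σ ℝ) * (C √lam * C (r / (2 * √lam))) = C r := by
    rw [show (2 : MvPolynomial σ ℝ) = C 2 from rfl, ← C_mul, ← C_mul]
    congr 1
    field_simp
  have hsq : g * a ^ 2 - (C lam * g - C r * g ^ 2) ∈ pointIdeal u ^ 3 := by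
    rw [show g * a ^ 2 - (C lam * g - C r * g ^ 2) = C (r / (2 * √lam)) ^ 2 * g ^ 3 by
      rw [ha]; linear_combination g * hconst - g ^ 2 * hlinear]
    exact Ideal.mul_mem_left _ _ (Ideal.pow_mem_pow hg 3)
  refine ⟨g * W * a ^ 2, ?_, ?_⟩
  · rw [mul_comm]
    exact hM.sq_mem_multipliers a _ hmem
  · rw [← sub_add_sub_cancel _ (g * a ^ 2)]
    exact add_mem (mul_mul_sub_mul_mem_pointIdeal_cube hg hW _) hsq

theorem exists_mem_hasPosDefJet_sub [Fintype σ] {ι : Type*} {S : Finset ι}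
    {g : ι → MvPolynomial σ ℝ} {lam : ι → ℝ} {F : MvPolynomial σ ℝ}
    (hL : F - ∑ o ∈ S, C (lam o) * g o ∈ pointIdeal u ^ 2) (hg : ∀ o ∈ S, g o ∈ pointIdeal u)
    (hpos : ∀ v ≠ 0, (∀ o ∈ S, eval u (dirDeriv v (g o)) = 0) →
      0 < eval u (dirDeriv v (dirDeriv v (F - ∑ o ∈ S, C (lam o) * g o))))
    (hmult : ∀ o ∈ S, HasPenalizedMultiplier M u (g o) (lam o)) :
    ∃ s ∈ M, HasPosDefJet u (F - s) := by
  obtain ⟨r, hr, hjet⟩ := exists_hasPosDefJet_add_sum_sq hL hg hpos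
  choose! s hsM hs using fun o ho => hmult o ho r hr
  refine ⟨∑ o ∈ S, s o, sum_mem hsM, hjet.congr ?_⟩
  rw [show F - ∑ o ∈ S, s o - (F - ∑ o ∈ S, C (lam o) * g o + C r * ∑ o ∈ S, g o ^ 2)
      = -∑ o ∈ S, (s o - (C (lam o) * g o - C r * g o ^ 2)) by
    simp only [Finset.sum_sub_distrib, Finset.mul_sum]; ring]
  exact neg_mem (sum_mem hs)

end Multipliers

section StrictKKT

variable {n : ℕ} {ι κ : Type} {Es : Finset ι} {ge : ι → RPoly n} {Is : Finset κ}
  {gi : κ → RPoly n} {F : RPoly n} {u : Fin n → ℝ}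

/-- First order stationarity with strict complementarity and the second order sufficient
condition at `u`, for minimizing `F` subject to `ge j = 0` (`j ∈ Es`), `gi j ≥ 0` (`j ∈ Is`). -/
def StrictKKTAt (Es : Finset ι) (ge : ι → RPoly n) (Is : Finset κ) (gi : κ → RPoly n)
    (F : RPoly n) (u : Fin n → ℝ) : Prop :=
  ∃ (lamE : ι → ℝ) (lamI : κ → ℝ),
    (gradP F u =
      (∑ j ∈ Es, lamE j • gradP (ge j) u) + ∑ j ∈ Is, lamI j • gradP (gi j) u) ∧
    (∀ j ∈ Is, 0 ≤ lamI j ∧ lamI j * eval u (gi j) = 0) ∧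
    (∀ j ∈ Is, 0 < lamI j + eval u (gi j)) ∧
    (∀ v : Fin n → ℝ, v ≠ 0 →
      (∀ j ∈ Es, (∑ i, v i * gradP (ge j) u i) = 0) →
      (∀ j ∈ Is, eval u (gi j) = 0 → (∑ i, v i * gradP (gi j) u i) = 0) →
      0 < ∑ i, ∑ i', v i *
        ((hessP F u i i' - ∑ j ∈ Es, lamE j * hessP (ge j) u i i')
          - ∑ j ∈ Is, lamI j * hessP (gi j) u i i') * v i')

theorem gradP_sub_sum (F : RPoly n) (S : Finset ι) (lam : ι → ℝ) (g : ι → RPoly n)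
    (u : Fin n → ℝ) :
    gradP (F - ∑ o ∈ S, C (lam o) * g o) u = gradP F u - ∑ o ∈ S, lam o • gradP (g o) u := by
  funext i
  simp [gradP, C_mul', smul_eval]

theorem hessP_sub_sum (F : RPoly n) (S : Finset ι) (lam : ι → ℝ) (g : ι → RPoly n)
    (u : Fin n → ℝ) (i j : Fin n) :
    hessP (F - ∑ o ∈ S, C (lam o) * g o) u i j
      = hessP F u i j - ∑ o ∈ S, lam o * hessP (g o) u i j := by
  simp [hessP, C_mul', smul_eval]

theorem sub_sum_disjSum_active_eq [DecidablePred fun o => eval u (gi o) = 0] {lamE : ι → ℝ}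
    {lamI : κ → ℝ} (hcompl : ∀ o ∈ Is, lamI o * eval u (gi o) = 0) :
    F - ∑ o ∈ Es.disjSum {o ∈ Is | eval u (gi o) = 0}, C (Sum.elim lamE lamI o) * Sum.elim ge gi o
      = F - ∑ o ∈ Es, C (lamE o) * ge o - ∑ o ∈ Is, C (lamI o) * gi o := by
  rw [Finset.sum_disjSum, ← sub_sub]
  refine congrArg _ (Finset.sum_filter_of_ne fun o ho hne => ?_)
  exact (mul_eq_zero.1 (hcompl o ho)).resolve_left fun hlam => hne (by simp [hlam])

theorem StrictKKTAt.exists_mem_hasPosDefJet_sub {M : AddSubmonoid (RPoly n)}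
    (hM : IsQuadraticModule M) (hkkt : StrictKKTAt Es ge Is gi F u) (hF : eval u F = 0)
    (hge : ∀ o ∈ Es, eval u (ge o) = 0)
    (hEq : ∀ o ∈ Es, ∃ W, W - 1 ∈ pointIdeal u ^ 2 ∧ ∀ q, ge o * W * q ∈ M)
    (hIn : ∀ o ∈ Is, eval u (gi o) = 0 → ∃ W, W - 1 ∈ pointIdeal u ^ 2 ∧ gi o * W ∈ M) :
    ∃ s ∈ M, HasPosDefJet u (F - s) := by
  classical
  obtain ⟨lamE, lamI, hstat, hcompl, hstrict, hsosc⟩ := hkkt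
  have hsum := sub_sum_disjSum_active_eq (Es := Es) (ge := ge) (F := F) (lamE := lamE)
    fun o ho => (hcompl o ho).2
  set S := Es.disjSum {o ∈ Is | eval u (gi o) = 0}
  have hg : ∀ o ∈ S, Sum.elim ge gi o ∈ pointIdeal u := by
    rintro (o | o) ho
    · exact mem_pointIdeal.2 (hge o (Finset.inl_mem_disjSum.1 ho))
    · exact mem_pointIdeal.2 (Finset.mem_filter.1 (Finset.inr_mem_disjSum.1 ho)).2
  refine _root_.exists_mem_hasPosDefJet_sub (S := S) (g := Sum.elim ge gi)
    (lam := Sum.elim lamE lamI) ?_ hg (fun v hv hker => ?_) ?_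
  · refine mem_pointIdeal_sq_of_eval_dirDeriv_eq_zero (sub_mem (mem_pointIdeal.2 hF)
      (sum_mem fun o ho => Ideal.mul_mem_left _ _ (hg o ho))) fun v => ?_
    rw [hsum, eval_dirDeriv]
    change ∑ i, v i * gradP _ u i = 0
    rw [gradP_sub_sum, gradP_sub_sum, hstat, sub_sub, sub_self]
    simp
  · rw [hsum, eval_dirDeriv_dirDeriv]
    change 0 < ∑ i, ∑ j, v i * hessP _ u i j * v j
    simp only [hessP_sub_sum]
    refine hsosc v hv (fun o ho => ?_) fun o ho hact => ?_
    · exact eval_dirDeriv u v (ge o) ▸ hker (.inl o) (Finset.inl_mem_disjSum.2 ho)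
    · exact eval_dirDeriv u v (gi o) ▸
        hker (.inr o) (Finset.inr_mem_disjSum.2 (Finset.mem_filter.2 ⟨ho, hact⟩))
  · rintro (o | o) ho
    · obtain ⟨W, hW, hmem⟩ := hEq o (Finset.inl_mem_disjSum.1 ho)
      exact hasPenalizedMultiplier_of_forall_mul_mem (hg _ ho) hW hmem _
    · obtain ⟨hoI, hact⟩ := Finset.mem_filter.1 (Finset.inr_mem_disjSum.1 ho)
      obtain ⟨W, hW, hmem⟩ := hIn o hoI hact
      exact hM.hasPenalizedMultiplier_of_pos (hg _ ho) hW hmem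
        (by simpa [hact] using hstrict o hoI)

end StrictKKT

section GeneratedModule

variable {A : Type*} [CommRing A] {H G : Set A}

/-- `Ideal(H) + QM(G)`, the quadratic module generated by the equations `h = 0` for `h ∈ H` and
the inequalities `g ≥ 0` for `g ∈ G`. -/
def quadraticModule (H G : Set A) : AddSubmonoid A :=
  AddSubmonoid.closure ({p | ∃ h ∈ H, ∃ q, p = h * q} ∪ {p | ∃ g ∈ insert 1 G, ∃ q, p = g * q ^ 2})

theorem mul_mem_quadraticModule {h : A} (hh : h ∈ H) (q : A) : h * q ∈ quadraticModule H G :=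
  AddSubmonoid.subset_closure (.inl ⟨h, hh, q, rfl⟩)

theorem mul_sq_mem_quadraticModule {g : A} (hg : g ∈ insert 1 G) (q : A) :
    g * q ^ 2 ∈ quadraticModule H G :=
  AddSubmonoid.subset_closure (.inr ⟨g, hg, q, rfl⟩)

theorem mem_quadraticModule {g : A} (hg : g ∈ insert 1 G) : g ∈ quadraticModule H G := by
  simpa using mul_sq_mem_quadraticModule (H := H) hg 1

theorem isQuadraticModule_quadraticModule (H G : Set A) :
    IsQuadraticModule (quadraticModule H G) where
  one_mem := mem_quadraticModule (Set.mem_insert 1 G)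
  sq_mem_multipliers a m hm := by
    induction hm using AddSubmonoid.closure_induction with
    | mem m hm =>
      obtain ⟨h, hh, q, rfl⟩ | ⟨g, hg, q, rfl⟩ := hm
      · rw [mul_left_comm]
        exact mul_mem_quadraticModule hh _
      · rw [mul_left_comm, ← mul_pow]
        exact mul_sq_mem_quadraticModule hg _
    | zero => simp
    | add m₁ m₂ _ _ h₁ h₂ =>
      rw [mul_add]
      exact add_mem h₁ h₂

theorem map_mem_quadraticModule {F : Type*} [FunLike F A A] [RingHomClass F A A] {φ : F}
    (hH : ∀ h ∈ H, φ h = h) (hG : ∀ g ∈ G, φ g = g) {m : A} (hm : m ∈ quadraticModule H G) :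
    φ m ∈ quadraticModule H G := by
  induction hm using AddSubmonoid.closure_induction with
  | mem m hm =>
    obtain ⟨h, hh, q, rfl⟩ | ⟨g, hg, q, rfl⟩ := hm
    · rw [map_mul, hH h hh]
      exact mul_mem_quadraticModule hh _
    · have hφg : φ g = g := by
        obtain rfl | hg := hg
        · exact map_one φ
        · exact hG g hg
      rw [map_mul, map_pow, hφg]
      exact mul_sq_mem_quadraticModule hg _
  | zero => simp
  | add m₁ m₂ _ _ h₁ h₂ =>
    rw [map_add]
    exact add_mem h₁ h₂

theorem eval_eq_zero_of_mem_nonnegSet_quadraticModule {σ : Type*} {H G : Set (MvPolynomial σ ℝ)}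
    {x : σ → ℝ} (hx : x ∈ nonnegSet (quadraticModule H G)) {h : MvPolynomial σ ℝ} (hh : h ∈ H) :
    eval x h = 0 := by
  have hpos := hx _ (mul_mem_quadraticModule hh 1)
  have hneg := hx _ (mul_mem_quadraticModule hh (-1))
  rw [mul_one] at hpos
  rw [mul_neg_one, map_neg] at hneg
  linarith

end GeneratedModule

section Antipode

variable {σ : Type*}

/-- The substitution `x ↦ -x`. -/
noncomputable def antipode : MvPolynomial σ ℝ →ₐ[ℝ] MvPolynomial σ ℝ :=
  aeval fun i => -X i

theorem eval_antipode (x : σ → ℝ) (p : MvPolynomial σ ℝ) :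
    eval x (antipode p) = eval (-x) p := by
  induction p using MvPolynomial.induction_on with
  | C c => simp [antipode]
  | add p q hp hq => simp only [map_add, hp, hq]
  | mul_X p i hp => simp only [map_mul, hp]; simp [antipode]

theorem antipode_eq_self_of_eval_neg {p : MvPolynomial σ ℝ} (hp : ∀ x, eval (-x) p = eval x p) :
    antipode p = p :=
  MvPolynomial.funext fun x => by rw [eval_antipode, hp]

theorem antipode_mem_pointIdeal_pow {u : σ → ℝ} {k : ℕ} {p : MvPolynomial σ ℝ}
    (hp : p ∈ pointIdeal (-u) ^ k) : antipode p ∈ pointIdeal u ^ k := by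
  have hle : Ideal.map antipode (pointIdeal (-u)) ≤ pointIdeal u := by
    rw [Ideal.map_le_iff_le_comap]
    intro q hq
    rw [Ideal.mem_comap, mem_pointIdeal, eval_antipode, mem_pointIdeal.1 hq]
  exact Ideal.pow_right_mono hle k (Ideal.map_pow antipode _ k ▸ Ideal.mem_map_of_mem antipode hp)

theorem antipode_sqDist [Fintype σ] (u : σ → ℝ) : antipode (sqDist (-u)) = sqDist u :=
  MvPolynomial.funext fun x => by
    rw [eval_antipode, eval_sqDist, eval_sqDist]
    exact Finset.sum_congr rfl fun i _ => by simp only [Pi.neg_apply]; ring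

theorem HasPosDefJet.antipode [Fintype σ] {u : σ → ℝ} {P : MvPolynomial σ ℝ}
    (hP : HasPosDefJet (-u) P) : HasPosDefJet u (antipode P) := by
  obtain ⟨ε, hε, ℓ, hℓ, hrem⟩ := hP
  refine ⟨ε, hε, fun k => _root_.antipode (ℓ k), fun k => ?_, ?_⟩
  · simpa using antipode_mem_pointIdeal_pow (k := 1) (by simpa using hℓ k)
  · simpa [antipode_sqDist, ← algebraMap_eq, map_sum] using antipode_mem_pointIdeal_pow hrem

theorem neg_mem_nonnegSet {M : AddSubmonoid (MvPolynomial σ ℝ)} (hM : ∀ m ∈ M, antipode m ∈ M)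
    {x : σ → ℝ} (hx : x ∈ nonnegSet M) : -x ∈ nonnegSet M := fun m hm => by
  rw [← eval_antipode]
  exact hx _ (hM m hm)

end Antipode

section Homogenize

variable {n : ℕ} (p : RPoly n)

theorem eval_homogAux (l : ℕ) (y : Fin (n + 1) → ℝ) :
    eval y (homogAux l p) =
      ∑ α ∈ p.support, p.coeff α * (y 0 ^ (l - mdeg α) * ∏ i, y (Fin.succ i) ^ α i) := by
  rw [homogAux, map_sum]
  refine Finset.sum_congr rfl fun α _ => ?_
  rw [eval_monomial, Finsupp.prod_add_index' (by simp) (by intros; rw [pow_add]),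
    Finsupp.prod_single_index (by simp),
    Finsupp.prod_mapDomain_index (by simp) (by intros; rw [pow_add]),
    Finsupp.prod_fintype _ _ (by simp)]

theorem mdeg_eq_degree (α : Fin n →₀ ℕ) : mdeg α = α.degree :=
  (Finsupp.degree_eq_sum α).symm

variable {p} in
theorem mdeg_le_totalDegree {α : Fin n →₀ ℕ} (hα : α ∈ p.support) : mdeg α ≤ p.totalDegree :=
  mdeg_eq_degree α ▸ le_totalDegree hα

theorem eval_smul_homogenize (t : ℝ) (y : Fin (n + 1) → ℝ) :
    eval (t • y) (homogenize p) = t ^ p.totalDegree * eval y (homogenize p) := by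
  rw [homogenize, eval_homogAux, eval_homogAux, Finset.mul_sum]
  refine Finset.sum_congr rfl fun α hα => ?_
  have hpow : t ^ p.totalDegree = t ^ (p.totalDegree - mdeg α) * t ^ mdeg α := by
    rw [← pow_add, Nat.sub_add_cancel (mdeg_le_totalDegree hα)]
  simp only [Pi.smul_apply, smul_eq_mul, mul_pow, Finset.prod_mul_distrib,
    Finset.prod_pow_eq_pow_sum]
  rw [hpow, mdeg]
  ring

theorem eval_neg_homogenize (y : Fin (n + 1) → ℝ) :
    eval (-y) (homogenize p) = (-1) ^ p.totalDegree * eval y (homogenize p) := by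
  rw [← neg_one_smul ℝ y, eval_smul_homogenize]

theorem eval_cons_one_homogenize (x : Fin n → ℝ) :
    eval (Fin.cons 1 x : Fin (n + 1) → ℝ) (homogenize p) = eval x p := by
  rw [homogenize, eval_homogAux, eval_eq']
  simp

theorem eval_homogenize_of_ne_zero {y : Fin (n + 1) → ℝ} (hy : y 0 ≠ 0) :
    eval y (homogenize p) = y 0 ^ p.totalDegree * eval (fun i => y (Fin.succ i) / y 0) p := by
  have hscale : y = y 0 • (Fin.cons 1 fun i => y (Fin.succ i) / y 0 : Fin (n + 1) → ℝ) := by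
    funext i
    refine Fin.cases ?_ (fun i => ?_) i
    · simp
    · simp [mul_div_cancel₀ _ hy]
  conv_lhs => rw [hscale, eval_smul_homogenize, eval_cons_one_homogenize]

theorem eval_homogenize_of_eq_zero {y : Fin (n + 1) → ℝ} (hy : y 0 = 0) :
    eval y (homogenize p) =
      eval (fun i => y (Fin.succ i)) (homogeneousComponent p.totalDegree p) := by
  rw [homogenize, eval_homogAux, homogeneousComponent_apply, map_sum, Finset.sum_filter]
  refine Finset.sum_congr rfl fun α hα => ?_
  rw [← mdeg_eq_degree, hy]
  split_ifs with hdeg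
  · rw [hdeg, eval_monomial, Finsupp.prod_fintype _ _ (by simp)]
    simp
  · have hlt := (mdeg_le_totalDegree hα).lt_of_ne hdeg
    rw [zero_pow (Nat.sub_ne_zero_of_lt hlt)]
    simp

end Homogenize

section HomogenizedProblem

variable {n : ℕ} {E I : Finset ℕ} {c : ℕ → RPoly n} {f : RPoly n} {fmin : ℝ}

/-- The homogenization of `p`, multiplied by `x₀` if that is needed to make its degree even. -/
noncomputable def evenHomogenize (p : RPoly n) : RPoly (n + 1) :=
  X 0 ^ (p.totalDegree % 2) * homogenize p

/-- The objective `f̃ - γ x₀ᵈ` of the homogenized problem. -/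
noncomputable def homObjective (f : RPoly n) (γ : ℝ) : RPoly (n + 1) :=
  homogenize f - C γ * X 0 ^ f.totalDegree

/-- The quadratic module of the homogenized constraints on the sphere. All generators are even and
the constraint `x₀ ≥ 0` is left out, so that the module is invariant under `x ↦ -x`. -/
noncomputable def homModule (E I : Finset ℕ) (c : ℕ → RPoly n) : AddSubmonoid (RPoly (n + 1)) :=
  quadraticModule (insert (sphereP n) ((fun j => evenHomogenize (c j)) '' E))
    ((fun j => evenHomogenize (c j)) '' I)

theorem eval_evenHomogenize (p : RPoly n) (x : Fin (n + 1) → ℝ) :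
    eval x (evenHomogenize p) = x 0 ^ (p.totalDegree % 2) * eval x (homogenize p) := by
  simp [evenHomogenize]

theorem eval_homObjective (f : RPoly n) (γ : ℝ) (x : Fin (n + 1) → ℝ) :
    eval x (homObjective f γ) = eval x (homogenize f) - γ * x 0 ^ f.totalDegree := by
  simp [homObjective]

theorem antipode_evenHomogenize (p : RPoly n) : antipode (evenHomogenize p) = evenHomogenize p :=
  antipode_eq_self_of_eval_neg fun x => by
    have hsign : (-1 : ℝ) ^ (p.totalDegree % 2) * (-1) ^ p.totalDegree = 1 := by
      rw [← pow_add, Even.neg_one_pow]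
      grind
    rw [eval_evenHomogenize, eval_evenHomogenize, eval_neg_homogenize, Pi.neg_apply, neg_pow (x 0)]
    linear_combination x 0 ^ (p.totalDegree % 2) * eval x (homogenize p) * hsign

theorem antipode_sphereP (n : ℕ) : antipode (sphereP n) = sphereP n :=
  antipode_eq_self_of_eval_neg fun x => by simp [sphereP]

theorem antipode_homObjective (hf : Even f.totalDegree) (γ : ℝ) :
    antipode (homObjective f γ) = homObjective f γ :=
  antipode_eq_self_of_eval_neg fun x => by
    rw [eval_homObjective, eval_homObjective, eval_neg_homogenize, hf.neg_one_pow, one_mul,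
      Pi.neg_apply, hf.neg_pow]

theorem antipode_mem_homModule {m : RPoly (n + 1)} (hm : m ∈ homModule E I c) :
    antipode m ∈ homModule E I c := by
  refine map_mem_quadraticModule ?_ ?_ hm
  · rintro _ (rfl | ⟨j, -, rfl⟩)
    · exact antipode_sphereP n
    · exact antipode_evenHomogenize (c j)
  · rintro _ ⟨j, -, rfl⟩
    exact antipode_evenHomogenize (c j)

theorem sphereP_mul_mem_homModule (q : RPoly (n + 1)) : sphereP n * q ∈ homModule E I c :=
  mul_mem_quadraticModule (Set.mem_insert _ _) q

theorem evenHomogenize_mul_mem_homModule {j : ℕ} (hj : j ∈ E) (q : RPoly (n + 1)) :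
    evenHomogenize (c j) * q ∈ homModule E I c :=
  mul_mem_quadraticModule (Set.mem_insert_of_mem _ (Set.mem_image_of_mem
    (fun j => evenHomogenize (c j)) (Finset.mem_coe.2 hj))) q

theorem evenHomogenize_mul_sq_mem_homModule {j : ℕ} (hj : j ∈ I) (q : RPoly (n + 1)) :
    evenHomogenize (c j) * q ^ 2 ∈ homModule E I c :=
  mul_sq_mem_quadraticModule (Set.mem_insert_of_mem _ (Set.mem_image_of_mem
    (fun j => evenHomogenize (c j)) (Finset.mem_coe.2 hj))) q

theorem isArchimedeanModule_homModule (E I : Finset ℕ) (c : ℕ → RPoly n) :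
    IsArchimedeanModule (homModule E I c) :=
  (isQuadraticModule_quadraticModule _ _).isArchimedeanModule_of_sphere 
    sphereP_mul_mem_homModule

theorem sum_sq_eq_one_of_mem_nonnegSet {x : Fin (n + 1) → ℝ}
    (hx : x ∈ nonnegSet (homModule E I c)) : ∑ i, x i ^ 2 = 1 := by
  have hsphere := eval_eq_zero_of_mem_nonnegSet_quadraticModule hx (Set.mem_insert _ _)
  simpa [sphereP, sub_eq_zero] using hsphere

theorem mem_Khom_of_mem_nonnegSet {x : Fin (n + 1) → ℝ}
    (hx : x ∈ nonnegSet (homModule E I c)) (hx0 : 0 < x 0) : x ∈ Khom E I c := by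
  refine ⟨fun j hj => ?_, fun j hj => ?_, sum_sq_eq_one_of_mem_nonnegSet hx, hx0.le⟩
  · have hzero := eval_eq_zero_of_mem_nonnegSet_quadraticModule hx
      (Set.mem_insert_of_mem _ ⟨j, hj, rfl⟩)
    rw [eval_evenHomogenize] at hzero
    exact (mul_eq_zero.1 hzero).resolve_left (pow_pos hx0 _).ne'
  · have hnonneg := hx _ (mem_quadraticModule (Set.mem_insert_of_mem _ ⟨j, hj, rfl⟩))
    rw [eval_evenHomogenize] at hnonneg
    exact nonneg_of_mul_nonneg_right hnonneg (pow_pos hx0 _)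

theorem mem_Khom_or_neg_mem_Khom {x : Fin (n + 1) → ℝ} (hx : x ∈ nonnegSet (homModule E I c))
    (hx0 : x 0 ≠ 0) : x ∈ Khom E I c ∨ -x ∈ Khom E I c := by
  obtain hneg | hpos := hx0.lt_or_gt
  · exact .inr (mem_Khom_of_mem_nonnegSet
      (neg_mem_nonnegSet (fun _ => antipode_mem_homModule) hx) (neg_pos.2 hneg))
  · exact .inl (mem_Khom_of_mem_nonnegSet hx hpos)

theorem div_mem_Kset {x : Fin (n + 1) → ℝ} (hx : x ∈ Khom E I c) (hx0 : 0 < x 0) :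
    (fun i => x (Fin.succ i) / x 0) ∈ Kset E I c := by
  refine ⟨fun j hj => ?_, fun j hj => ?_⟩
  · have hzero := hx.1 j hj
    rw [eval_homogenize_of_ne_zero _ hx0.ne'] at hzero
    exact (mul_eq_zero.1 hzero).resolve_left (pow_pos hx0 _).ne'
  · have hnonneg := hx.2.1 j hj
    rw [eval_homogenize_of_ne_zero _ hx0.ne'] at hnonneg
    exact nonneg_of_mul_nonneg_right hnonneg (pow_pos hx0 _)

theorem eval_homObjective_nonneg_of_pos (hle : ∀ x ∈ Kset E I c, fmin ≤ eval x f)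
    {x : Fin (n + 1) → ℝ} (hx : x ∈ Khom E I c) (hx0 : 0 < x 0) :
    0 ≤ eval x (homObjective f fmin) := by
  rw [eval_homObjective, eval_homogenize_of_ne_zero f hx0.ne', mul_comm fmin, ← mul_sub]
  exact mul_nonneg (pow_pos hx0 _).le (sub_nonneg.2 (hle _ (div_mem_Kset hx hx0)))

theorem eval_homObjective_pos_of_eq_zero
    (hpd : ∀ x : Fin n → ℝ, x ≠ 0 → 0 < eval x (homogeneousComponent f.totalDegree f))
    (hdeg : f.totalDegree ≠ 0) {x : Fin (n + 1) → ℝ} (hsph : ∑ i, x i ^ 2 = 1) (hx0 : x 0 = 0) :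
    0 < eval x (homObjective f fmin) := by
  rw [eval_homObjective, eval_homogenize_of_eq_zero f hx0, hx0, zero_pow hdeg, mul_zero, sub_zero]
  refine hpd _ fun hzero => ?_
  have htail (i : Fin n) : x i.succ = 0 := congrFun hzero i
  simp [Fin.sum_univ_succ, hx0, htail] at hsph

theorem even_totalDegree_of_homogeneousComponent_pos
    (hpd : ∀ x : Fin n → ℝ, x ≠ 0 → 0 < eval x (homogeneousComponent f.totalDegree f)) :
    Even f.totalDegree := by
  rcases isEmpty_or_nonempty (Fin n) with _ | _
  · rw [eq_C_of_isEmpty f, totalDegree_C]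
    exact Even.zero
  · have hpos := hpd 1 one_ne_zero
    have hpos' := hpd (-1) (neg_ne_zero.2 one_ne_zero)
    have hneg := eval_neg_homogenize f (Fin.cons 0 1)
    rw [eval_homogenize_of_eq_zero f (by simp), eval_homogenize_of_eq_zero f (by simp)] at hneg
    change eval (-1) _ = _ * eval 1 _ at hneg
    by_contra hodd
    rw [(Nat.not_even_iff_odd.1 hodd).neg_one_pow] at hneg
    linarith

theorem exists_mul_sq_sub_one_mem_pointIdeal_sq {σ : Type*} {u : σ → ℝ} {p : MvPolynomial σ ℝ}
    (hp : 0 < eval u p) : ∃ q, p * q ^ 2 - 1 ∈ pointIdeal u ^ 2 := by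
  set a := eval u p with ha
  set t : MvPolynomial σ ℝ := C a⁻¹ * p - 1 with ht
  have ht_mem : t ∈ pointIdeal u := by simp [mem_pointIdeal, ht, ← ha, hp.ne']
  have hsqrt : (C (√a)⁻¹ : MvPolynomial σ ℝ) ^ 2 = C a⁻¹ := by
    rw [← C_pow, inv_pow, Real.sq_sqrt hp.le]
  have htwo : (2 * C 2⁻¹ : MvPolynomial σ ℝ) = 1 := by
    rw [show (2 : MvPolynomial σ ℝ) = C 2 from rfl, ← C_mul, mul_inv_cancel₀ two_ne_zero, C_1]
  -- `1 - t / 2` is the first order expansion of `(1 + t) ^ (-1/2)`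
  refine ⟨C (√a)⁻¹ * (1 - C 2⁻¹ * t), ?_⟩
  have hexpand : p * (C (√a)⁻¹ * (1 - C 2⁻¹ * t)) ^ 2 - 1
      = (C 2⁻¹ ^ 2 * (1 + t) - 1) * t ^ 2 := by
    linear_combination p * (1 - C 2⁻¹ * t) ^ 2 * hsqrt - (t + t ^ 2) * htwo
      - (1 - C 2⁻¹ * t) ^ 2 * ht
  rw [hexpand]
  exact Ideal.mul_mem_left _ _ (Ideal.pow_mem_pow ht_mem 2)

theorem mem_OS {S : Finset ℕ} {o : Option ℕ} : o ∈ OS S ↔ o = none ∨ ∃ j ∈ S, some j = o := by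
  simp [OS]

theorem exists_mem_homModule_hasPosDefJet_sub_of_pos {F : RPoly (n + 1)} {u : Fin (n + 1) → ℝ}
    (hu : u ∈ Khom E I c) (hu0 : 0 < u 0) (hF : eval u F = 0)
    (hkkt : StrictKKTAt (OS E) (gEqH c) (OS I) (gInH c) F u) :
    ∃ s ∈ homModule E I c, HasPosDefJet u (F - s) := by
  choose q hq using fun j : ℕ => exists_mul_sq_sub_one_mem_pointIdeal_sq (u := u)
    (p := X 0 ^ ((c j).totalDegree % 2)) (by simpa using pow_pos hu0 _)
  refine hkkt.exists_mem_hasPosDefJet_sub (isQuadraticModule_quadraticModule _ _) hF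
    (fun o ho => ?_) (fun o ho => ?_) fun o ho hact => ?_
  · obtain rfl | ⟨j, hj, rfl⟩ := mem_OS.1 ho
    · simp [gEqH, sphereP, hu.2.2.1]
    · exact hu.1 j hj
  · obtain rfl | ⟨j, hj, rfl⟩ := mem_OS.1 ho
    · refine ⟨1, by simp, fun r => ?_⟩
      rw [mul_one]
      exact sphereP_mul_mem_homModule r
    · refine ⟨_, hq j, fun r => ?_⟩
      convert evenHomogenize_mul_mem_homModule hj (q j ^ 2 * r) using 1
      simp only [gEqH, Option.elim, evenHomogenize]
      ring
  · obtain rfl | ⟨j, hj, rfl⟩ := mem_OS.1 ho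
    · exact absurd hact (by simpa [gInH] using hu0.ne')
    · refine ⟨_, hq j, ?_⟩
      convert evenHomogenize_mul_sq_mem_homModule hj (q j) using 1
      simp only [gInH, Option.elim, evenHomogenize]
      ring

theorem exists_mem_homModule_hasPosDefJet_sub {F : RPoly (n + 1)} (hF : antipode F = F)
    (hkkt : ∀ u ∈ Khom E I c, eval u F = 0 → StrictKKTAt (OS E) (gEqH c) (OS I) (gInH c) F u)
    {u : Fin (n + 1) → ℝ} (hu : u ∈ nonnegSet (homModule E I c)) (hu0 : u 0 ≠ 0)
    (hzero : eval u F = 0) : ∃ s ∈ homModule E I c, HasPosDefJet u (F - s) := by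
  have hpos {v : Fin (n + 1) → ℝ} (hv : v ∈ nonnegSet (homModule E I c)) (hv0 : 0 < v 0)
      (hvzero : eval v F = 0) : ∃ s ∈ homModule E I c, HasPosDefJet v (F - s) :=
    have hvK := mem_Khom_of_mem_nonnegSet hv hv0
    exists_mem_homModule_hasPosDefJet_sub_of_pos hvK hv0 hvzero (hkkt v hvK hvzero)
  obtain hneg | hu0 := hu0.lt_or_gt
  · have hzero' : eval (-u) F = 0 := by rw [← eval_antipode, hF, hzero]
    obtain ⟨s, hs, hjet⟩ := hpos (neg_mem_nonnegSet (fun _ => antipode_mem_homModule) hu)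
      (neg_pos.2 hneg) hzero'
    refine ⟨antipode s, antipode_mem_homModule hs, ?_⟩
    simpa only [map_sub, hF] using hjet.antipode
  · exact hpos hu hu0 hzero

theorem eval_homogenize_of_totalDegree_eq_zero (hf : f.totalDegree = 0) (x : Fin (n + 1) → ℝ)
    (y : Fin n → ℝ) : eval x (homogenize f) = eval y f := by
  have horigin (z : Fin (n + 1) → ℝ) : eval z (homogenize f) = eval 0 (homogenize f) := by
    simpa [hf] using (eval_smul_homogenize f 0 z).symm
  rw [horigin x, ← horigin (Fin.cons 1 y), eval_cons_one_homogenize]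

theorem homObjective_eq_zero (hf : f.totalDegree = 0)
    (hfmin : IsGLB {v : ℝ | ∃ x ∈ Kset E I c, v = eval x f} fmin) : homObjective f fmin = 0 := by
  have hconst (x : Fin (n + 1) → ℝ) := eval_homogenize_of_totalDegree_eq_zero hf x
  obtain ⟨_, y, hy, -⟩ := hfmin.nonempty
  have hvalue : eval y f = fmin := by
    refine (hfmin.unique ⟨?_, fun b hb => hb ⟨y, hy, rfl⟩⟩).symm
    rintro _ ⟨z, -, rfl⟩
    exact ((hconst 0 y).symm.trans (hconst 0 z)).le
  exact MvPolynomial.funext fun x => by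
    rw [eval_homObjective, hconst x y, hvalue, hf, pow_zero, mul_one, sub_self, map_zero]

theorem eval_homObjective_nonneg
    (hpd : ∀ x : Fin n → ℝ, x ≠ 0 → 0 < eval x (homogeneousComponent f.totalDegree f))
    (hdeg : f.totalDegree ≠ 0) (hle : ∀ x ∈ Kset E I c, fmin ≤ eval x f)
    {x : Fin (n + 1) → ℝ} (hx : x ∈ Khom E I c) : 0 ≤ eval x (homObjective f fmin) := by
  rcases hx.2.2.2.eq_or_lt with hx0 | hx0
  · exact (eval_homObjective_pos_of_eq_zero hpd hdeg hx.2.2.1 hx0.symm).le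
  · exact eval_homObjective_nonneg_of_pos hle hx hx0

theorem homObjective_mem_homModule
    (hpd : ∀ x : Fin n → ℝ, x ≠ 0 → 0 < eval x (homogeneousComponent f.totalDegree f))
    (hfmin : IsGLB {v : ℝ | ∃ x ∈ Kset E I c, v = eval x f} fmin)
    (hkkt : ∀ u ∈ Khom E I c,
      (∀ x ∈ Khom E I c, eval u (homObjective f fmin) ≤ eval x (homObjective f fmin)) →
        StrictKKTAt (OS E) (gEqH c) (OS I) (gInH c) (homObjective f fmin) u) :
    homObjective f fmin ∈ homModule E I c := by
  rcases eq_or_ne f.totalDegree 0 with hdeg | hdeg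
  · rw [homObjective_eq_zero hdeg hfmin]
    exact zero_mem _
  have hanti := antipode_homObjective (even_totalDegree_of_homogeneousComponent_pos hpd) fmin
  have hnonneg {x : Fin (n + 1) → ℝ} (hx : x ∈ Khom E I c) :=
    eval_homObjective_nonneg hpd hdeg (fun x hx => hfmin.1 ⟨x, hx, rfl⟩) hx
  have hinfty {x : Fin (n + 1) → ℝ} (hx : x ∈ nonnegSet (homModule E I c)) :=
    eval_homObjective_pos_of_eq_zero (fmin := fmin) hpd hdeg (sum_sq_eq_one_of_mem_nonnegSet hx)
  refine (isArchimedeanModule_homModule E I c).mem_of_nonneg_of_hasPosDefJet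
    (fun x hx => ?_) fun u hu hzero => ?_
  · by_cases hx0 : x 0 = 0
    · exact (hinfty hx hx0).le
    · obtain hxK | hxK := mem_Khom_or_neg_mem_Khom hx hx0
      · exact hnonneg hxK
      · rw [← hanti, eval_antipode]
        exact hnonneg hxK
  · refine exists_mem_homModule_hasPosDefJet_sub hanti (fun v hv hv0 => ?_) hu
      (fun hu0 => (hinfty hu hu0).ne' hzero) hzero
    exact hkkt v hv fun x hx => hv0 ▸ hnonneg hx

end HomogenizedProblem

section TruncatedModule

variable {n : ℕ} {ι : Type} {S : Finset ι} {g : ι → RPoly n} {k l : ℕ} {p q r : RPoly n}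

theorem isSOS_iff_isSumSq : IsSOS p ↔ IsSumSq p := by
  constructor
  · rintro ⟨L, rfl⟩
    induction L with
    | nil => exact .zero
    | cons q L ih => simpa [pow_two] using ih.sq_add q
  · intro hp
    induction hp with
    | zero => exact ⟨[], rfl⟩
    | sq_add q _ ih =>
      obtain ⟨L, rfl⟩ := ih
      exact ⟨q :: L, by simp [pow_two]⟩

theorem eval_nonneg_of_isSumSq {σ : Type*} {p : MvPolynomial σ ℝ} (hp : IsSumSq p) (x : σ → ℝ) :
    0 ≤ eval x p := by
  induction hp with
  | zero => simp
  | sq_add q _ ih => simpa using add_nonneg (mul_self_nonneg (eval x q)) ih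

theorem zero_mem_idealDeg (hk : ∀ j ∈ S, (g j).totalDegree ≤ k) : (0 : RPoly n) ∈ IdealDeg S g k :=
  ⟨0, fun j hj => by simpa using hk j hj, by simp⟩

theorem add_mem_idealDeg (hp : p ∈ IdealDeg S g k) (hq : q ∈ IdealDeg S g k) :
    p + q ∈ IdealDeg S g k := by
  obtain ⟨a, ha, rfl⟩ := hp
  obtain ⟨b, hb, rfl⟩ := hq
  refine ⟨a + b, fun j hj => ?_, by simp [mul_add, Finset.sum_add_distrib]⟩
  have hab : (a j + b j).totalDegree ≤ _ := totalDegree_add (a j) (b j)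
  have := ha j hj
  have := hb j hj
  rw [Pi.add_apply]
  omega

theorem generator_mul_mem_idealDeg {j : ι} (hk : ∀ i ∈ S, (g i).totalDegree ≤ k) (hj : j ∈ S)
    (hq : q.totalDegree + (g j).totalDegree ≤ k) : g j * q ∈ IdealDeg S g k := by
  classical
  refine ⟨Pi.single j q, fun i hi => ?_, by simp [Pi.single_apply, hj]⟩
  obtain rfl | hij := eq_or_ne i j
  · simpa using hq
  · simpa [Pi.single_apply, hij] using hk i hi

theorem mul_mem_idealDeg (hr : r.totalDegree ≤ l) (hp : p ∈ IdealDeg S g k) :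
    r * p ∈ IdealDeg S g (k + l) := by
  obtain ⟨a, ha, rfl⟩ := hp
  refine ⟨fun j => r * a j, fun j hj => ?_, by simp [Finset.mul_sum, mul_left_comm]⟩
  have := totalDegree_mul r (a j)
  have := ha j hj
  beta_reduce
  omega

theorem isSumSq_mem_qModDeg (hk : ∀ j ∈ S, (g j).totalDegree ≤ k) (hp : IsSumSq p)
    (hpk : p.totalDegree ≤ k) : p ∈ QModDeg S g k :=
  ⟨p, 0, isSOS_iff_isSumSq.2 hp, hpk,
    fun j hj => ⟨isSOS_iff_isSumSq.2 .zero, by simpa using hk j hj⟩, by simp⟩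

theorem add_mem_qModDeg (hp : p ∈ QModDeg S g k) (hq : q ∈ QModDeg S g k) :
    p + q ∈ QModDeg S g k := by
  obtain ⟨a₀, a, ha₀, hda₀, ha, rfl⟩ := hp
  obtain ⟨b₀, b, hb₀, hdb₀, hb, rfl⟩ := hq
  simp only [isSOS_iff_isSumSq] at ha₀ hb₀ ha hb
  refine ⟨a₀ + b₀, a + b, isSOS_iff_isSumSq.2 (ha₀.add hb₀),
    (totalDegree_add _ _).trans (max_le hda₀ hdb₀),
    fun j hj => ⟨isSOS_iff_isSumSq.2 ((ha j hj).1.add (hb j hj).1), ?_⟩, ?_⟩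
  · have hab : (a j + b j).totalDegree ≤ _ := totalDegree_add (a j) (b j)
    have := (ha j hj).2
    have := (hb j hj).2
    rw [Pi.add_apply]
    omega
  · simp only [Pi.add_apply, mul_add, Finset.sum_add_distrib]
    ring

theorem generator_mul_mem_qModDeg {j : ι} (hk : ∀ i ∈ S, (g i).totalDegree ≤ k) (hj : j ∈ S)
    (hq : IsSumSq q) (hqk : q.totalDegree + (g j).totalDegree ≤ k) : g j * q ∈ QModDeg S g k := by
  classical
  refine ⟨0, Pi.single j q, isSOS_iff_isSumSq.2 .zero, by simp, fun i hi => ?_,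
    by simp [Pi.single_apply, hj]⟩
  rw [isSOS_iff_isSumSq]
  obtain rfl | hij := eq_or_ne i j
  · simpa using ⟨hq, hqk⟩
  · simpa [Pi.single_apply, hij, IsSumSq.zero] using hk i hi

theorem mul_mem_qModDeg (hr : IsSumSq r) (hrl : r.totalDegree ≤ l) (hp : p ∈ QModDeg S g k) :
    r * p ∈ QModDeg S g (k + l) := by
  obtain ⟨a₀, a, ha₀, hda₀, ha, rfl⟩ := hp
  simp only [isSOS_iff_isSumSq] at ha₀ ha
  refine ⟨r * a₀, fun j => r * a j, isSOS_iff_isSumSq.2 (hr.mul ha₀), ?_,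
    fun j hj => ⟨isSOS_iff_isSumSq.2 (hr.mul (ha j hj).1), ?_⟩,
    by simp [mul_add, Finset.mul_sum, mul_left_comm]⟩
  · have := totalDegree_mul r a₀
    omega
  · have := totalDegree_mul r (a j)
    have := (ha j hj).2
    beta_reduce
    omega

variable {E I : Finset ℕ} {c : ℕ → RPoly n}

/-- The cone `Ideal(c_eq)_k + QM(c_in)_k` of degree-`k` certificates of nonnegativity on `K`. -/
def truncatedModule (E I : Finset ℕ) (c : ℕ → RPoly n) (k : ℕ) : Set (RPoly n) :=
  {p | ∃ p₁ ∈ IdealDeg E c k, ∃ p₂ ∈ QModDeg I c k, p = p₁ + p₂}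

theorem totalDegree_le_of_dKOrig_le {j : ℕ} (hk : dKOrig E I c ≤ k) (hj : j ∈ E ∪ I) :
    (c j).totalDegree ≤ 2 * k := by
  have := (Finset.sup_le_iff.1 hk) j hj
  omega

theorem isSumSq_mem_truncatedModule (hk : dKOrig E I c ≤ k) (hp : IsSumSq p)
    (hpk : p.totalDegree ≤ 2 * k) : p ∈ truncatedModule E I c (2 * k) :=
  ⟨0, zero_mem_idealDeg fun _ hj => totalDegree_le_of_dKOrig_le hk (Finset.mem_union_left _ hj),
    p, isSumSq_mem_qModDeg
      (fun _ hj => totalDegree_le_of_dKOrig_le hk (Finset.mem_union_right _ hj)) hp hpk,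
    (zero_add p).symm⟩

theorem equality_mul_mem_truncatedModule {j : ℕ} (hk : dKOrig E I c ≤ k) (hj : j ∈ E)
    (hq : q.totalDegree + (c j).totalDegree ≤ 2 * k) :
    c j * q ∈ truncatedModule E I c (2 * k) :=
  ⟨c j * q, generator_mul_mem_idealDeg
      (fun _ hi => totalDegree_le_of_dKOrig_le hk (Finset.mem_union_left _ hi)) hj hq,
    0, isSumSq_mem_qModDeg
      (fun _ hi => totalDegree_le_of_dKOrig_le hk (Finset.mem_union_right _ hi)) .zero (by simp),
    (add_zero _).symm⟩

theorem inequality_mul_mem_truncatedModule {j : ℕ} (hk : dKOrig E I c ≤ k) (hj : j ∈ I)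
    (hq : IsSumSq q) (hqk : q.totalDegree + (c j).totalDegree ≤ 2 * k) :
    c j * q ∈ truncatedModule E I c (2 * k) :=
  ⟨0, zero_mem_idealDeg fun _ hi => totalDegree_le_of_dKOrig_le hk (Finset.mem_union_left _ hi),
    c j * q, generator_mul_mem_qModDeg
      (fun _ hi => totalDegree_le_of_dKOrig_le hk (Finset.mem_union_right _ hi)) hj hq hqk,
    (zero_add _).symm⟩

theorem add_mem_truncatedModule (hp : p ∈ truncatedModule E I c k)
    (hq : q ∈ truncatedModule E I c k) : p + q ∈ truncatedModule E I c k := by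
  obtain ⟨p₁, hp₁, p₂, hp₂, rfl⟩ := hp
  obtain ⟨q₁, hq₁, q₂, hq₂, rfl⟩ := hq
  exact ⟨p₁ + q₁, add_mem_idealDeg hp₁ hq₁, p₂ + q₂, add_mem_qModDeg hp₂ hq₂,
    add_add_add_comm _ _ _ _⟩

theorem mul_mem_truncatedModule (hr : IsSumSq r) (hrl : r.totalDegree ≤ l)
    (hp : p ∈ truncatedModule E I c k) : r * p ∈ truncatedModule E I c (k + l) := by
  obtain ⟨p₁, hp₁, p₂, hp₂, rfl⟩ := hp
  exact ⟨r * p₁, mul_mem_idealDeg hrl hp₁, r * p₂, mul_mem_qModDeg hr hrl hp₂, mul_add _ _ _⟩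

theorem eval_nonneg_of_mem_truncatedModule {x : Fin n → ℝ} (hp : p ∈ truncatedModule E I c k)
    (hx : x ∈ Kset E I c) : 0 ≤ eval x p := by
  obtain ⟨_, ⟨q, -, rfl⟩, _, ⟨σ₀, σ, hσ₀, -, hσ, rfl⟩, rfl⟩ := hp
  simp only [isSOS_iff_isSumSq] at hσ₀ hσ
  simp only [map_add, map_sum, map_mul]
  refine add_nonneg (Finset.sum_eq_zero fun j hj => ?_).ge (add_nonneg
    (eval_nonneg_of_isSumSq hσ₀ x) (Finset.sum_nonneg fun j hj => ?_))
  · rw [hx.1 j hj, zero_mul]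
  · exact mul_nonneg (hx.2 j hj) (eval_nonneg_of_isSumSq (hσ j hj).1 x)

end TruncatedModule

section Denominator

variable {n : ℕ} {E I : Finset ℕ} {c : ℕ → RPoly n} {f p : RPoly n} {fmin : ℝ} {d k : ℕ}

/-- The denominator `θ = 1 + ‖x‖²`. -/
noncomputable def theta (n : ℕ) : RPoly n := 1 + ∑ i, X i ^ 2

theorem eval_theta (x : Fin n → ℝ) : eval x (theta n) = 1 + ∑ i, x i ^ 2 := by
  simp [theta]

theorem eval_theta_pos (x : Fin n → ℝ) : 0 < eval x (theta n) := by
  rw [eval_theta]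
  positivity

theorem totalDegree_theta_le (n : ℕ) : (theta n).totalDegree ≤ 2 := by
  refine (totalDegree_add _ _).trans (max_le (by simp) (totalDegree_finsetSum_le fun i _ => ?_))
  simp

theorem totalDegree_theta_pow_le (n k : ℕ) : (theta n ^ k).totalDegree ≤ 2 * k := by
  have := totalDegree_pow (theta n) k
  have := Nat.mul_le_mul_left k (totalDegree_theta_le n)
  omega

theorem isSumSq_theta (n : ℕ) : IsSumSq (theta n) :=
  .add .one (.sum_sq _ _)

theorem isSumSq_theta_pow (n k : ℕ) : IsSumSq (theta n ^ k) := by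
  simpa using IsSumSq.prod (I := Finset.range k) (x := fun _ => theta n) fun _ _ => isSumSq_theta n

theorem denRelaxVal_eq_of_mem_truncatedModule
    (hfmin : IsGLB {v : ℝ | ∃ x ∈ Kset E I c, v = eval x f} fmin)
    (hmem : theta n ^ k * (f - C fmin) ∈ truncatedModule E I c (2 * k + d)) :
    DenRelaxVal E I c f d k = fmin := by
  refine IsGreatest.csSup_eq ⟨hmem, fun γ hγ => hfmin.2 ?_⟩
  rintro _ ⟨x, hx, rfl⟩
  change theta n ^ k * (f - C γ) ∈ truncatedModule E I c (2 * k + d) at hγ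
  have hnonneg : 0 ≤ eval x (theta n) ^ k * (eval x f - γ) := by
    simpa using eval_nonneg_of_mem_truncatedModule hγ hx
  exact sub_nonneg.1 (nonneg_of_mul_nonneg_right hnonneg (pow_pos (eval_theta_pos x) k))

end Denominator

section Dehomogenization

variable {n : ℕ}

/-- `p` is `θᵏ` times the even part of `P` at the points of the sphere over the affine chart:
these are the `t (1, x)` with `t² θ(x) = 1`, and averaging over the two roots `±t` keeps `p`
polynomial. -/
def IsDehomogenization (k : ℕ) (P : RPoly (n + 1)) (p : RPoly n) : Prop :=
  ∀ (x : Fin n → ℝ) (t : ℝ), t ^ 2 * eval x (theta n) = 1 →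
    eval x (theta n) ^ k *
      ((eval (t • Fin.cons 1 x) P + eval (-t • Fin.cons 1 x) P) / 2) = eval x p

/-- The splitting `θᵏ q(t (1, x)) = a(x) + t b(x)` of `q` into even and odd parts on the sphere
points `t (1, x)` with `t² θ(x) = 1`. -/
structure IsEvenOddSplit (k : ℕ) (q : RPoly (n + 1)) (a b : RPoly n) : Prop where
  totalDegree_even_le : a.totalDegree ≤ 2 * k
  totalDegree_odd_le : b.totalDegree ≤ 2 * k + 1
  eval_eq : ∀ (x : Fin n → ℝ) (t : ℝ), t ^ 2 * eval x (theta n) = 1 →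
    eval x (theta n) ^ k * eval (t • Fin.cons 1 x) q = eval x a + t * eval x b

namespace IsEvenOddSplit

variable {k : ℕ} {q q' : RPoly (n + 1)} {a a' b b' : RPoly n}

theorem const (n : ℕ) (r : ℝ) : IsEvenOddSplit 0 (C r) (C r : RPoly n) 0 :=
  ⟨by simp, by simp, by simp⟩

theorem theta_pow_mul (h : IsEvenOddSplit k q a b) (r : ℕ) :
    IsEvenOddSplit (k + r) q (theta n ^ r * a) (theta n ^ r * b) where
  totalDegree_even_le := by
    have := totalDegree_mul (theta n ^ r) a
    have := totalDegree_theta_pow_le n r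
    have := h.totalDegree_even_le
    omega
  totalDegree_odd_le := by
    have := totalDegree_mul (theta n ^ r) b
    have := totalDegree_theta_pow_le n r
    have := h.totalDegree_odd_le
    omega
  eval_eq x t ht := by
    simp only [map_mul, map_pow]
    linear_combination eval x (theta n) ^ r * h.eval_eq x t ht

theorem add (h : IsEvenOddSplit k q a b) (h' : IsEvenOddSplit k q' a' b') :
    IsEvenOddSplit k (q + q') (a + a') (b + b') where
  totalDegree_even_le :=
    (totalDegree_add _ _).trans (max_le h.totalDegree_even_le h'.totalDegree_even_le)
  totalDegree_odd_le :=
    (totalDegree_add _ _).trans (max_le h.totalDegree_odd_le h'.totalDegree_odd_le)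
  eval_eq x t ht := by
    simp only [map_add]
    linear_combination h.eval_eq x t ht + h'.eval_eq x t ht

-- `X i` takes the value `t y` at `t (1, x)`, with `y` the `i`-th coordinate of `(1, x)`; so it
-- swaps the two parities, and `t² θ = 1` turns `t² b` back into `b / θ`.
theorem mul_X (h : IsEvenOddSplit k q a b) (i : Fin (n + 1)) :
    IsEvenOddSplit (k + 1) (q * X i) (b * Fin.cases 1 X i) (theta n * (a * Fin.cases 1 X i)) := by
  have hdeg : (Fin.cases 1 X i : RPoly n).totalDegree ≤ 1 := by cases i using Fin.cases <;> simp
  have heval (x : Fin n → ℝ) :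
      eval x (Fin.cases 1 X i : RPoly n) = (Fin.cons 1 x : Fin (n + 1) → ℝ) i := by
    cases i using Fin.cases <;> simp
  refine ⟨?_, ?_, fun x t ht => ?_⟩
  · have := totalDegree_mul b (Fin.cases 1 X i)
    have := h.totalDegree_odd_le
    omega
  · have := totalDegree_mul (theta n) (a * Fin.cases 1 X i)
    have := totalDegree_mul a (Fin.cases 1 X i)
    have := totalDegree_theta_le n
    have := h.totalDegree_even_le
    omega
  · simp only [map_mul, eval_X, Pi.smul_apply, smul_eq_mul, heval]
    linear_combination eval x (theta n) * t * (Fin.cons 1 x : Fin (n + 1) → ℝ) i * h.eval_eq x t ht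
      + eval x b * (Fin.cons 1 x : Fin (n + 1) → ℝ) i * ht

theorem isDehomogenization (h : IsEvenOddSplit k q a b) : IsDehomogenization k q a := by
  intro x t ht
  linear_combination (h.eval_eq x t ht + h.eval_eq x (-t) (by rwa [neg_sq])) / 2

theorem isDehomogenization_sq (h : IsEvenOddSplit k q a b) :
    IsDehomogenization (2 * k + 1) (q ^ 2) (theta n * a ^ 2 + b ^ 2) := by
  intro x t ht
  calc eval x (theta n) ^ (2 * k + 1) *
        ((eval (t • Fin.cons 1 x) (q ^ 2) + eval (-t • Fin.cons 1 x) (q ^ 2)) / 2)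
      = eval x (theta n) * (((eval x (theta n) ^ k * eval (t • Fin.cons 1 x) q) ^ 2
          + (eval x (theta n) ^ k * eval (-t • Fin.cons 1 x) q) ^ 2) / 2) := by
        simp only [map_pow]
        ring
    _ = eval x (theta n) * (((eval x a + t * eval x b) ^ 2
          + (eval x a + -t * eval x b) ^ 2) / 2) := by
        rw [h.eval_eq x t ht, h.eval_eq x (-t) (by rwa [neg_sq])]
    _ = eval x (theta n * a ^ 2 + b ^ 2) := by
        simp only [map_add, map_mul, map_pow]
        linear_combination eval x b ^ 2 * ht

theorem totalDegree_sq_le (h : IsEvenOddSplit k q a b) :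
    (theta n * a ^ 2 + b ^ 2).totalDegree ≤ 2 * (2 * k + 1) := by
  refine (totalDegree_add _ _).trans (max_le ?_ ?_)
  · have := totalDegree_mul (theta n) (a ^ 2)
    have := totalDegree_pow a 2
    have := totalDegree_theta_le n
    have := h.totalDegree_even_le
    omega
  · have := totalDegree_pow b 2
    have := h.totalDegree_odd_le
    omega

end IsEvenOddSplit

theorem exists_isEvenOddSplit (q : RPoly (n + 1)) (k₀ : ℕ) :
    ∃ k ≥ k₀, ∃ a b, IsEvenOddSplit k q a b := by
  induction q using MvPolynomial.induction_on generalizing k₀ with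
  | C r => exact ⟨0 + k₀, by omega, _, _, (IsEvenOddSplit.const n r).theta_pow_mul k₀⟩
  | add q q' hq hq' =>
    obtain ⟨k, hk, a, b, h⟩ := hq k₀
    obtain ⟨k', hk', a', b', h'⟩ := hq' k
    obtain ⟨r, rfl⟩ := Nat.exists_eq_add_of_le hk'
    exact ⟨k + r, by omega, _, _, (h.theta_pow_mul r).add h'⟩
  | mul_X q i hq =>
    obtain ⟨k, hk, a, b, h⟩ := hq k₀
    exact ⟨k + 1, by omega, _, _, h.mul_X i⟩

theorem exists_isDehomogenization (q : RPoly (n + 1)) (k₀ : ℕ) :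
    ∃ k ≥ k₀, ∃ p : RPoly n, p.totalDegree ≤ 2 * k ∧ IsDehomogenization k q p := by
  obtain ⟨k, hk, a, b, h⟩ := exists_isEvenOddSplit q k₀
  exact ⟨k, hk, a, h.totalDegree_even_le, h.isDehomogenization⟩

theorem exists_isSumSq_isDehomogenization_sq (q : RPoly (n + 1)) (k₀ : ℕ) :
    ∃ k ≥ k₀, ∃ p : RPoly n, IsSumSq p ∧ p.totalDegree ≤ 2 * k ∧
      IsDehomogenization k (q ^ 2) p := by
  obtain ⟨k, hk, a, b, h⟩ := exists_isEvenOddSplit q k₀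
  refine ⟨2 * k + 1, by omega, _, ?_, h.totalDegree_sq_le, h.isDehomogenization_sq⟩
  exact ((isSumSq_theta n).mul (IsSquare.sq a).isSumSq).add (IsSquare.sq b).isSumSq

namespace IsDehomogenization

variable {k m : ℕ} {P Q : RPoly (n + 1)} {p q f : RPoly n} {γ : ℝ}

theorem zero (k : ℕ) : IsDehomogenization k (0 : RPoly (n + 1)) 0 := fun x t _ => by simp

theorem sphereP_mul (k : ℕ) (q : RPoly (n + 1)) : IsDehomogenization k (sphereP n * q) 0 := by
  have hsphere (x : Fin n → ℝ) (t : ℝ) (ht : t ^ 2 * eval x (theta n) = 1) :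
      eval (t • Fin.cons 1 x) (sphereP n) = 0 := by
    rw [eval_theta] at ht
    simp only [sphereP, map_sub, map_sum, map_pow, eval_X, map_one, Pi.smul_apply, smul_eq_mul,
      mul_pow, ← Finset.mul_sum]
    rw [Fin.sum_univ_succ]
    simp only [Fin.cons_zero, Fin.cons_succ, one_pow, ht, sub_self]
  intro x t ht
  rw [map_mul, map_mul, hsphere x t ht, hsphere x (-t) (by rwa [neg_sq])]
  simp

theorem add (hp : IsDehomogenization k P p) (hq : IsDehomogenization k Q q) :
    IsDehomogenization k (P + Q) (p + q) := by
  intro x t ht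
  simp only [map_add]
  linear_combination hp x t ht + hq x t ht

theorem theta_pow_mul (hp : IsDehomogenization k P p) (r : ℕ) :
    IsDehomogenization (k + r) P (theta n ^ r * p) := by
  intro x t ht
  simp only [map_mul, map_pow]
  linear_combination eval x (theta n) ^ r * hp x t ht

theorem evenHomogenize_mul (hq : IsDehomogenization k Q q) (p : RPoly n) :
    IsDehomogenization (k + (p.totalDegree + 1) / 2) (evenHomogenize p * Q) (p * q) := by
  have heval (x : Fin n → ℝ) (t : ℝ) (ht : t ^ 2 * eval x (theta n) = 1) :
      eval x (theta n) ^ ((p.totalDegree + 1) / 2) * eval (t • Fin.cons 1 x) (evenHomogenize p)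
        = eval x p := by
    have hexp : p.totalDegree % 2 + p.totalDegree = 2 * ((p.totalDegree + 1) / 2) := by omega
    rw [eval_evenHomogenize, eval_smul_homogenize, eval_cons_one_homogenize, Pi.smul_apply,
      Fin.cons_zero, smul_eq_mul, mul_one, ← mul_assoc (t ^ _), ← pow_add, hexp, pow_mul,
      ← mul_assoc, ← mul_pow, mul_comm (eval x _), ht, one_pow, one_mul]
  intro x t ht
  simp only [map_mul]
  linear_combination eval x p * hq x t ht
    + eval x (theta n) ^ k * eval (t • Fin.cons 1 x) Q / 2 * heval x t ht
    + eval x (theta n) ^ k * eval (-t • Fin.cons 1 x) Q / 2 * heval x (-t) (by rwa [neg_sq])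

theorem eq_theta_pow_mul (hf : f.totalDegree = m + m)
    (hp : IsDehomogenization (k + m) (homObjective f γ) p) : theta n ^ k * (f - C γ) = p := by
  refine MvPolynomial.funext fun x => ?_
  have ht : (√(eval x (theta n)))⁻¹ ^ 2 * eval x (theta n) = 1 := by
    rw [inv_pow, Real.sq_sqrt (eval_theta_pos x).le, inv_mul_cancel₀ (eval_theta_pos x).ne']
  have heval (t : ℝ) (ht : t ^ 2 * eval x (theta n) = 1) :
      eval x (theta n) ^ m * eval (t • Fin.cons 1 x) (homObjective f γ) = eval x f - γ := by
    have hpow : eval x (theta n) ^ m * t ^ f.totalDegree = 1 := by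
      rw [hf, ← two_mul, pow_mul, ← mul_pow, mul_comm, ht, one_pow]
    rw [eval_homObjective, eval_smul_homogenize, eval_cons_one_homogenize, Pi.smul_apply,
      Fin.cons_zero, smul_eq_mul, mul_one]
    linear_combination (eval x f - γ) * hpow
  rw [← hp x _ ht]
  simp only [map_mul, map_pow, map_sub, eval_C]
  linear_combination -eval x (theta n) ^ k / 2 * (heval _ ht + heval _ (by rwa [neg_sq]))

end IsDehomogenization

variable {E I : Finset ℕ} {c : ℕ → RPoly n} {P : RPoly (n + 1)}

theorem exists_isDehomogenization_evenHomogenize_mul {j : ℕ} (hj : j ∈ E) (q : RPoly (n + 1)) :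
    ∃ k, ∃ p ∈ truncatedModule E I c (2 * k),
      IsDehomogenization k (evenHomogenize (c j) * q) p := by
  obtain ⟨k, hk, p, hpk, hp⟩ := exists_isDehomogenization q (dKOrig E I c)
  exact ⟨_, _, equality_mul_mem_truncatedModule (hk.trans (Nat.le_add_right _ _)) hj (by omega),
    hp.evenHomogenize_mul (c j)⟩

theorem exists_isDehomogenization_evenHomogenize_mul_sq {j : ℕ} (hj : j ∈ I)
    (q : RPoly (n + 1)) : ∃ k, ∃ p ∈ truncatedModule E I c (2 * k),
      IsDehomogenization k (evenHomogenize (c j) * q ^ 2) p := by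
  obtain ⟨k, hk, p, hsq, hpk, hp⟩ := exists_isSumSq_isDehomogenization_sq q (dKOrig E I c)
  exact ⟨_, _, inequality_mul_mem_truncatedModule (hk.trans (Nat.le_add_right _ _)) hj hsq
    (by omega), hp.evenHomogenize_mul (c j)⟩

theorem theta_pow_mul_mem_truncatedModule {k r : ℕ} {p : RPoly n}
    (hp : p ∈ truncatedModule E I c (2 * k)) :
    theta n ^ r * p ∈ truncatedModule E I c (2 * (k + r)) := by
  rw [mul_add]
  exact mul_mem_truncatedModule (isSumSq_theta_pow n r) (totalDegree_theta_pow_le n r) hp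

theorem exists_isDehomogenization_of_mem_homModule (hP : P ∈ homModule E I c) :
    ∃ k, ∃ p ∈ truncatedModule E I c (2 * k), IsDehomogenization k P p := by
  have zero_mem : (0 : RPoly n) ∈ truncatedModule E I c (2 * dKOrig E I c) :=
    isSumSq_mem_truncatedModule le_rfl .zero (by simp)
  induction hP using AddSubmonoid.closure_induction with
  | mem P hP =>
    obtain ⟨_, rfl | ⟨j, hj, rfl⟩, q, rfl⟩ | ⟨_, rfl | ⟨j, hj, rfl⟩, q, rfl⟩ := hP
    · exact ⟨_, 0, zero_mem, .sphereP_mul _ q⟩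
    · exact exists_isDehomogenization_evenHomogenize_mul (Finset.mem_coe.1 hj) q
    · obtain ⟨k, hk, p, hsq, hpk, hp⟩ := exists_isSumSq_isDehomogenization_sq q (dKOrig E I c)
      exact ⟨k, p, isSumSq_mem_truncatedModule hk hsq hpk, by rwa [one_mul]⟩
    · exact exists_isDehomogenization_evenHomogenize_mul_sq (Finset.mem_coe.1 hj) q
  | zero => exact ⟨_, 0, zero_mem, .zero _⟩
  | add P Q _ _ hP hQ =>
    obtain ⟨k, p, hp, hPp⟩ := hP
    obtain ⟨l, q, hq, hQq⟩ := hQ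
    refine ⟨k + l, theta n ^ l * p + theta n ^ k * q, add_mem_truncatedModule
      (theta_pow_mul_mem_truncatedModule hp) ?_, (hPp.theta_pow_mul l).add ?_⟩
    · exact add_comm l k ▸ theta_pow_mul_mem_truncatedModule hq
    · exact add_comm l k ▸ hQq.theta_pow_mul k

theorem exists_theta_pow_mul_mem_truncatedModule {f : RPoly n} {γ : ℝ}
    (hf : Even f.totalDegree) (hmem : homObjective f γ ∈ homModule E I c) :
    ∃ k₀, ∀ k ≥ k₀, theta n ^ k * (f - C γ) ∈ truncatedModule E I c (2 * k + f.totalDegree) := by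
  obtain ⟨m, hm⟩ := hf
  obtain ⟨k₀, p, hp, hdehom⟩ := exists_isDehomogenization_of_mem_homModule hmem
  refine ⟨k₀, fun k hk => ?_⟩
  obtain ⟨r, hr⟩ := Nat.exists_eq_add_of_le (hk.trans (Nat.le_add_right k m))
  have hcert : theta n ^ k * (f - C γ) = theta n ^ r * p :=
    IsDehomogenization.eq_theta_pow_mul hm (hr ▸ hdehom.theta_pow_mul r)
  rw [hcert, show 2 * k + f.totalDegree = 2 * (k₀ + r) by omega]
  exact theta_pow_mul_mem_truncatedModule hp

end Dehomogenization

theorem statement_10_general {n : ℕ} {E I : Finset ℕ} {c : ℕ → RPoly n} {f : RPoly n} {fmin : ℝ}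
    (hpd : ∀ x : Fin n → ℝ, x ≠ 0 → 0 < eval x (homogeneousComponent f.totalDegree f))
    (hfmin : IsGLB {v : ℝ | ∃ x ∈ Kset E I c, v = eval x f} fmin)
    (hkkt : ∀ u ∈ Khom E I c,
      (∀ x ∈ Khom E I c, eval u (homObjective f fmin) ≤ eval x (homObjective f fmin)) →
        StrictKKTAt (OS E) (gEqH c) (OS I) (gInH c) (homObjective f fmin) u) :
    ∃ k₀ : ℕ, ∀ k ≥ k₀, DenRelaxVal E I c f f.totalDegree k = fmin := by
  obtain ⟨k₀, hcert⟩ := exists_theta_pow_mul_mem_truncatedModule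
    (even_totalDegree_of_homogeneousComponent_pos hpd) (homObjective_mem_homModule hpd hfmin hkkt)
  exact ⟨k₀, fun k hk => denRelaxVal_eq_of_mem_truncatedModule hfmin (hcert k hk)⟩

/-- Theorem 4.6(ii): finite convergence of the Moment-SOS hierarchy
with denominators, when the top homogeneous part of `f` is positive definite. -/
theorem statement_10
    (n d : ℕ) (E I : Finset ℕ) (hEI : Disjoint E I) (c : ℕ → RPoly n)
    (f : RPoly n) (hfd : f.totalDegree = d)
    (hK : (Kset E I c).Nonempty)
    -- f^hm is a positive definite form
    (hpd : ∀ x : Fin n → ℝ, x ≠ 0 → 0 < eval x (homogeneousComponent d f))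
    -- f_min = inf_K f is finite
    (fmin : ℝ) (hfmin : IsGLB {v : ℝ | ∃ x ∈ Kset E I c, v = eval x f} fmin)
    -- LICQC, SCC, SOSC at every global minimizer of (H)
    (hopt : ∀ u : Fin (n + 1) → ℝ,
      (u ∈ Khom E I c ∧ ∀ x ∈ Khom E I c,
        eval u (homogenize f - C fmin * (X 0 : RPoly (n + 1)) ^ d)
          ≤ eval x (homogenize f - C fmin * (X 0 : RPoly (n + 1)) ^ d)) →
      OptCondsAt (OS E) (gEqH c) (OS I) (gInH c)
        (homogenize f - C fmin * (X 0 : RPoly (n + 1)) ^ d) u) :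
    ∃ k0 : ℕ, ∀ k : ℕ, k0 ≤ k → DenRelaxVal E I c f d k = fmin := by
  subst hfd
  exact statement_10_general hpd hfmin fun u hu hmin => (hopt u ⟨hu, hmin⟩).2
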